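/- arXiv:1901.09349 — 2 statements merged into one kernel-verified Lean document; each statement's English description precedes it below -/
import Mathlib

section
/- There is a universal constant c* > 0 such that the following holds. For every real 0 < α < 1, every integer d ≥ 1, and every n-vertex α-expander G (with n ≥ 2) whose maximum vertex degree is at most d, every graph H whose size is at most (n / (c* · log₂ n)) · (α/d)^{c*} is a minor of G. -/
/-- Number of ordered pairs `(a,b)` with `a ∈ A`, `b ∈ B`, `a` adjacent to `b` in `G`.
For a partition `(A, Aᶜ)` this is exactly the number of edges crossing the cut. -/
noncomputable def cutCard {V : Type*} (G : SimpleGraph V) (A B : Set V) : ℕ :=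
  Nat.card {p : V × V // p.1 ∈ A ∧ p.2 ∈ B ∧ G.Adj p.1 p.2}

/-- `G` is an `α`-expander: every cut `(A, Aᶜ)` into two non-empty parts has at least
`α · min(|A|,|Aᶜ|)` crossing edges. -/
def IsExpander {V : Type*} (G : SimpleGraph V) (α : ℝ) : Prop :=
  ∀ A : Set V, A.Nonempty → Aᶜ.Nonempty →
    α * (min (Nat.card ↥A) (Nat.card ↥(Aᶜ)) : ℝ) ≤ (cutCard G A Aᶜ : ℝ)

/-- Maximum vertex degree of `G` is at most `d`. -/
def DegLE {V : Type*} (G : SimpleGraph V) (d : ℕ) : Prop :=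
  ∀ v : V, Nat.card ↥{w : V | G.Adj v w} ≤ d

/-- `H` is a minor of `G`: there are pairwise-disjoint branch sets, each inducing a
connected subgraph of `G`, with an edge of `G` between the branch sets of every
pair of adjacent vertices of `H`. -/
def IsMinor {W V : Type*} (H : SimpleGraph W) (G : SimpleGraph V) : Prop :=
  ∃ φ : W → Set V,
    (∀ u, (G.induce (φ u)).Connected) ∧
    (∀ u v, u ≠ v → Disjoint (φ u) (φ v)) ∧
    (∀ u v, H.Adj u v → ∃ a ∈ φ u, ∃ b ∈ φ v, G.Adj a b)

/-- The size of a graph: number of vertices plus number of edges. -/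
noncomputable def gsize {V : Type*} (G : SimpleGraph V) : ℕ := Nat.card V + Nat.card G.edgeSet

/-!
Build a minor model of `H` greedily, throwing away a set `A` of vertices whose edge boundary towards
the remainder (the vertices neither thrown away nor used by a branch set) is at most `α / 4 * |A|`.
Take `A` as large as possible, and then the partial model as large as possible. The cut around `A`
has at least `α / 2 * |A|` edges, since `|A| ≤ 2 / 3 * n`, and at most `α / 4 * |A| + d * B` edges,
where `B` bounds the total size of all branch sets; hence `|A| ≤ n / 6` once `24 * d * B ≤ α * n`.
Maximality of `A` makes the remainder an `α / 4`-expander, since a sparse cut in it could be thrown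
away, and gives every branch set a neighbour in the remainder, since otherwise that branch set could
be thrown away. Balls in an expander grow geometrically, so the remainder has diameter
`O((d / α) * log n)`, and joining the neighbours of the relevant branch sets by shortest paths there
yields a connected set of size `O((d / α) * log n * deg w + 1)`. It can serve as the branch set of a
vertex `w` that has none yet, contradicting maximality, so no such vertex exists. Summing over `w`,
`B = O((d / α) * log n * gsize H)`.
-/

open Set

section Cuts

variable {V V' : Type*} {G : SimpleGraph V} {G' : SimpleGraph V'} {A B : Set V} {d : ℕ}

theorem cutCard_comm (G : SimpleGraph V) (A B : Set V) : cutCard G A B = cutCard G B A :=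
  Nat.card_congr <| (Equiv.prodComm V V).subtypeEquiv fun p => by
    simp only [Equiv.prodComm_apply, Prod.fst_swap, Prod.snd_swap, G.adj_comm p.1 p.2]
    tauto

theorem cutCard_eq_zero (h : ∀ a ∈ A, ∀ b ∈ B, ¬G.Adj a b) : cutCard G A B = 0 :=
  have : IsEmpty {p : V × V // p.1 ∈ A ∧ p.2 ∈ B ∧ G.Adj p.1 p.2} :=
    ⟨fun p => h _ p.2.1 _ p.2.2.1 p.2.2.2⟩
  Nat.card_of_isEmpty

theorem cutCard_image (f : G ↪g G') (A B : Set V) :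
    cutCard G' (f '' A) (f '' B) = cutCard G A B := by
  have himage : {p : V' × V' | p.1 ∈ f '' A ∧ p.2 ∈ f '' B ∧ G'.Adj p.1 p.2} =
      Prod.map f f '' {p : V × V | p.1 ∈ A ∧ p.2 ∈ B ∧ G.Adj p.1 p.2} := by
    ext ⟨v, w⟩
    constructor
    · rintro ⟨⟨a, ha, rfl⟩, ⟨b, hb, rfl⟩, hab⟩
      exact ⟨(a, b), ⟨ha, hb, f.map_adj_iff.1 hab⟩, rfl⟩
    · rintro ⟨⟨a, b⟩, ⟨ha, hb, hab⟩, h⟩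
      obtain ⟨rfl, rfl⟩ := Prod.mk.inj h
      exact ⟨mem_image_of_mem f ha, mem_image_of_mem f hb, f.map_adj_iff.2 hab⟩
  exact (congrArg ncard himage).trans
    (ncard_image_of_injective _ (f.injective.prodMap f.injective))

theorem DegLE.of_embedding [Finite V'] (h : DegLE G' d) (f : G ↪g G') : DegLE G d := fun v =>
  (Nat.card_le_card_of_injective (fun w => (⟨f w.1, f.map_adj_iff.2 w.2⟩ : {w | G'.Adj (f v) w}))
    fun _ _ h => Subtype.ext (f.injective (Subtype.ext_iff.1 h))).trans (h (f v))

variable [Finite V]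

theorem cutCard_le_of_imp {A' B' : Set V}
    (h : ∀ a ∈ A, ∀ b ∈ B, G.Adj a b → a ∈ A' ∧ b ∈ B') : cutCard G A B ≤ cutCard G A' B' :=
  Nat.card_mono (toFinite _) fun _ hp =>
    ⟨(h _ hp.1 _ hp.2.1 hp.2.2).1, (h _ hp.1 _ hp.2.1 hp.2.2).2, hp.2.2⟩

theorem cutCard_union_left_le (G : SimpleGraph V) (A B C : Set V) :
    cutCard G (A ∪ B) C ≤ cutCard G A C + cutCard G B C :=
  (Nat.card_mono (toFinite _) fun _ hp => hp.1.imp (⟨·, hp.2⟩) (⟨·, hp.2⟩)).trans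
    (ncard_union_le _ _)

theorem cutCard_union_right_le (G : SimpleGraph V) (A B C : Set V) :
    cutCard G A (B ∪ C) ≤ cutCard G A B + cutCard G A C := by
  simpa only [cutCard_comm G A] using cutCard_union_left_le G B C A

theorem DegLE.cutCard_le_mul_left (h : DegLE G d) (A B : Set V) :
    cutCard G A B ≤ d * A.ncard := by
  have := Fintype.ofFinite A
  calc cutCard G A B
      ≤ Nat.card (Σ a : A, ↥{w : V | G.Adj a w}) :=
        Nat.card_le_card_of_injective (fun p => ⟨⟨p.1.1, p.2.1⟩, p.1.2, p.2.2.2⟩) fun p q hpq => by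
          simp only [Sigma.mk.injEq, Subtype.mk.injEq] at hpq
          grind
    _ = ∑ a : A, Nat.card ↥{w : V | G.Adj a w} := Nat.card_sigma
    _ ≤ ∑ _a : A, d := Finset.sum_le_sum fun a _ => h a
    _ = d * A.ncard := by
        rw [Finset.sum_const, Finset.card_univ, ← Nat.card_eq_fintype_card, Nat.card_coe_set_eq,
          smul_eq_mul, mul_comm]

theorem DegLE.cutCard_le_mul_right (h : DegLE G d) (A B : Set V) :
    cutCard G A B ≤ d * B.ncard :=
  cutCard_comm G A B ▸ h.cutCard_le_mul_left B A

end Cuts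

section Expansion

variable {V : Type*} [Finite V] {G : SimpleGraph V} {α : ℝ} {d : ℕ} {A U N : Set V}

theorem isExpander_iff_forall_two_mul_ncard_le :
    IsExpander G α ↔
      ∀ U : Set V, 2 * U.ncard ≤ Nat.card V → α * U.ncard ≤ cutCard G U Uᶜ := by
  simp only [IsExpander, Nat.card_coe_set_eq]
  constructor
  · intro h U hU
    rcases U.eq_empty_or_nonempty with rfl | hne
    · simp
    have hcompl := ncard_add_ncard_compl U
    have hpos := hne.ncard_pos
    have hle : (U.ncard : ℝ) ≤ Uᶜ.ncard := by norm_cast; omega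
    simpa only [min_eq_left hle] using h U hne (nonempty_of_ncard_ne_zero (by omega))
  · intro h U _ _
    have hcompl := ncard_add_ncard_compl U
    rcases le_total U.ncard Uᶜ.ncard with hle | hle
    · rw [min_eq_left (by exact_mod_cast hle)]
      exact h U (by omega)
    · rw [min_eq_right (by exact_mod_cast hle), cutCard_comm]
      simpa only [compl_compl] using h Uᶜ (by omega)

theorem IsExpander.mul_ncard_le_cutCard (h : IsExpander G α) (hU : 2 * U.ncard ≤ Nat.card V) :
    α * U.ncard ≤ cutCard G U Uᶜ :=
  isExpander_iff_forall_two_mul_ncard_le.1 h U hU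

theorem IsExpander.half_mul_ncard_le_cutCard (h : IsExpander G α) (hα : 0 ≤ α)
    (hA : 3 * A.ncard ≤ 2 * Nat.card V) : α / 2 * A.ncard ≤ cutCard G A Aᶜ := by
  have hcompl := ncard_add_ncard_compl A
  rcases le_total (2 * A.ncard) (Nat.card V) with hle | hle
  · have := h.mul_ncard_le_cutCard hle
    have : 0 ≤ α * A.ncard := by positivity
    linarith
  · have hlarge : (A.ncard : ℝ) ≤ 2 * Aᶜ.ncard := by norm_cast; omega
    calc α / 2 * A.ncard ≤ α / 2 * (2 * Aᶜ.ncard) := by gcongr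
      _ = α * Aᶜ.ncard := by ring
      _ ≤ cutCard G Aᶜ Aᶜᶜ := h.mul_ncard_le_cutCard (by omega)
      _ = cutCard G A Aᶜ := by rw [compl_compl, cutCard_comm]

theorem IsExpander.le_of_degLE (h : IsExpander G α) (hdeg : DegLE G d) (hV : 2 ≤ Nat.card V) :
    α ≤ d := by
  have : Nonempty V := (Nat.card_pos_iff.1 (by omega)).1
  obtain ⟨v⟩ := this
  have hcut : (cutCard G {v} {v}ᶜ : ℝ) ≤ d := by
    exact_mod_cast (hdeg.cutCard_le_mul_left {v} {v}ᶜ).trans_eq (by rw [ncard_singleton, mul_one])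
  simpa using (h.mul_ncard_le_cutCard (U := {v}) (by simpa using hV)).trans hcut

theorem IsExpander.one_add_div_mul_ncard_le (h : IsExpander G α) (hdeg : DegLE G d)
    (hU : 2 * U.ncard ≤ Nat.card V) (hUN : U ⊆ N) (hN : ∀ u ∈ U, ∀ v, G.Adj u v → v ∈ N) :
    (1 + α / d) * U.ncard ≤ N.ncard := by
  have hcut : cutCard G U Uᶜ ≤ d * (N \ U).ncard :=
    (cutCard_le_of_imp (B' := N \ U) fun u hu v hv huv => ⟨hu, hN u hu v huv, hv⟩).trans
      (hdeg.cutCard_le_mul_right U (N \ U))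
  have hboundary : α / d * U.ncard ≤ (N \ U).ncard := by
    rw [div_mul_eq_mul_div]
    refine div_le_of_le_mul₀ (by positivity) (by positivity) ?_
    rw [mul_comm ((N \ U).ncard : ℝ)]
    exact (h.mul_ncard_le_cutCard hU).trans (by exact_mod_cast hcut)
  rw [← ncard_sdiff_add_ncard_of_subset hUN]
  push_cast
  linarith

theorem IsExpander.lt_two_mul_ncard_ball_or_pow_le (h : IsExpander G α) (hdeg : DegLE G d)
    (hα : 0 ≤ α) (x : V) (k : ℕ) :
    Nat.card V < 2 * (G.ball x (k + 1)).ncard ∨ (1 + α / d) ^ k ≤ (G.ball x (k + 1)).ncard := by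
  induction k with
  | zero => simp
  | succ k ih =>
    have hmono : G.ball x (k + 1) ⊆ G.ball x ((k + 1 : ℕ) + 1) :=
      SimpleGraph.ball_mono (by norm_cast; omega)
    rcases ih with hlarge | hpow
    · exact .inl (hlarge.trans_le (by gcongr; exact toFinite _))
    rcases lt_or_ge (Nat.card V) (2 * (G.ball x (k + 1)).ncard) with hlarge | hsmall
    · exact .inl (hlarge.trans_le (by gcongr; exact toFinite _))
    have hN : ∀ u ∈ G.ball x (k + 1), ∀ v, G.Adj u v → v ∈ G.ball x ((k + 1 : ℕ) + 1) := by
      intro u hu v huv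
      calc G.edist v x ≤ G.edist v u + G.edist u x := SimpleGraph.edist_triangle
        _ = G.edist u x + 1 := by rw [SimpleGraph.edist_eq_one_iff_adj.2 huv.symm, add_comm]
        _ < ((k + 1 : ℕ) + 1 : ℕ∞) := by
          simpa [ENat.add_lt_add_iff_right] using hu
    right
    calc (1 + α / d) ^ (k + 1) = (1 + α / d) * (1 + α / d) ^ k := pow_succ' _ _
      _ ≤ (1 + α / d) * (G.ball x (k + 1)).ncard := by gcongr
      _ ≤ (G.ball x ((k + 1 : ℕ) + 1)).ncard := h.one_add_div_mul_ncard_le hdeg hsmall hmono hN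

theorem IsExpander.edist_le (h : IsExpander G α) (hdeg : DegLE G d) (hα : 0 ≤ α) {K : ℕ}
    (hK : Nat.card V < 2 * (1 + α / d) ^ K) (x y : V) : G.edist x y ≤ (2 * K : ℕ) := by
  have hlarge : ∀ z, Nat.card V < 2 * (G.ball z (K + 1)).ncard := fun z =>
    (h.lt_two_mul_ncard_ball_or_pow_le hdeg hα z K).elim id fun hpow => by
      exact_mod_cast hK.trans_le (mul_le_mul_of_nonneg_left hpow zero_le_two)
  obtain ⟨z, hzx, hzy⟩ : (G.ball x (K + 1) ∩ G.ball y (K + 1)).Nonempty := by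
    refine nonempty_of_ncard_ne_zero ?_
    have := ncard_inter_add_ncard_union (G.ball x (K + 1)) (G.ball y (K + 1))
    have := ncard_le_card (G.ball x (K + 1) ∪ G.ball y (K + 1))
    have := hlarge x
    have := hlarge y
    omega
  rw [SimpleGraph.mem_ball, ENat.lt_add_one_iff (ENat.natCast_ne_top K)] at hzx hzy
  calc G.edist x y ≤ G.edist x z + G.edist z y := SimpleGraph.edist_triangle
    _ ≤ K + K := add_le_add (G.edist_comm ▸ hzx) hzy
    _ = (2 * K : ℕ) := by push_cast; ring

end Expansion

section ConnectedSets

variable {V : Type*} [Finite V] {G : SimpleGraph V} {D : ℕ}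

theorem exists_connected_superset_ncard_le {x : V} (hD : ∀ y, G.edist x y ≤ D) (T : Set V) :
    ∃ S, x ∈ S ∧ T ⊆ S ∧ S.ncard ≤ D * T.ncard + 1 ∧ (G.induce S).Connected := by
  classical
  induction T, toFinite T using Set.Finite.induction_on with
  | empty => exact ⟨{x}, rfl, empty_subset _, by simp, by simp [SimpleGraph.connected_top]⟩
  | @insert y T hy _ ih =>
    obtain ⟨S, hxS, hTS, hcard, hconn⟩ := ih
    obtain ⟨p, hp⟩ := SimpleGraph.exists_walk_of_edist_ne_top
      (ne_top_of_le_ne_top (ENat.natCast_ne_top D) (hD y))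
    have hlength : p.length ≤ D := by exact_mod_cast hp ▸ hD y
    have hsupport : S ∪ {v | v ∈ p.support} = S ∪ (p.support.tail.toFinset : Set V) := by
      ext v
      simp only [p.mem_support_iff, mem_union, mem_ofPred_eq, List.coe_toFinset]
      grind
    refine ⟨S ∪ {v | v ∈ p.support}, .inl hxS, ?_, ?_,
      SimpleGraph.induce_union_connected hconn.preconnected
        p.connected_induce_support.preconnected ⟨x, hxS, p.start_mem_support⟩⟩
    · exact insert_subset (.inr p.end_mem_support) (hTS.trans subset_union_left)
    · have htail : p.support.tail.toFinset.card ≤ D :=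
        (List.toFinset_card_le _).trans (by simpa using hlength)
      calc (S ∪ {v | v ∈ p.support}).ncard
          ≤ S.ncard + p.support.tail.toFinset.card := by
            rw [hsupport, ← ncard_coe_finset]
            exact ncard_union_le _ _
        _ ≤ D * T.ncard + 1 + D := by gcongr
        _ = D * (insert y T).ncard + 1 := by rw [ncard_insert_of_notMem hy]; ring

theorem exists_connected_between_ncard_le {C T : Set V} (hC : C.Nonempty) (hTC : T ⊆ C)
    (hD : ∀ x y, (G.induce C).edist x y ≤ D) :
    ∃ S ⊆ C, T ⊆ S ∧ S.ncard ≤ D * T.ncard + 1 ∧ (G.induce S).Connected := by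
  obtain ⟨x, hx⟩ := hC
  obtain ⟨S, -, hTS, hcard, hconn⟩ :=
    exists_connected_superset_ncard_le (hD ⟨x, hx⟩) (Subtype.val ⁻¹' T : Set C)
  refine ⟨Subtype.val '' S, Subtype.coe_image_subset C S, ?_, ?_, ?_⟩
  · exact fun v hv => ⟨⟨v, hTC hv⟩, hTS hv, rfl⟩
  · rw [ncard_image_of_injective S Subtype.val_injective]
    rwa [ncard_preimage_of_injective_subset_range Subtype.val_injective (by simpa)] at hcard
  · refine hconn.map (SimpleGraph.induceHom (SimpleGraph.Embedding.induce C).toHom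
      (mapsTo_image _ S)) ?_
    rintro ⟨_, v, hv, rfl⟩
    exact ⟨⟨v, hv⟩, rfl⟩

end ConnectedSets

section PartialModels

variable {V W : Type*}

/-- A family of branch sets for a minor model of `H` in `G` that is still under construction:
`φ w = ∅` encodes that `w` has no branch set yet. The branch set of `w` has at most `b w`
vertices. -/
structure IsPartialModel (H : SimpleGraph W) (G : SimpleGraph V) (b : W → ℕ) (φ : W → Set V) :
    Prop where
  ncard_le : ∀ w, (φ w).ncard ≤ b w
  connected : ∀ w, (φ w).Nonempty → (G.induce (φ w)).Connected
  disjoint : ∀ u v, u ≠ v → Disjoint (φ u) (φ v)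
  exists_adj : ∀ u v, H.Adj u v → (φ u).Nonempty → (φ v).Nonempty →
    ∃ a ∈ φ u, ∃ b ∈ φ v, G.Adj a b

/-- The vertices still available for new branch sets: those neither discarded (in `A`) nor used by
the partial model `φ`. -/
def remainder (A : Set V) (φ : W → Set V) : Set V :=
  (A ∪ ⋃ w, φ w)ᶜ

/-- A partial model together with a set `A` of discarded vertices that has not grown too large and
has small edge boundary towards the remainder. -/
structure IsPrunedModel (H : SimpleGraph W) (G : SimpleGraph V) (β : ℝ) (b : W → ℕ) (A : Set V)
    (φ : W → Set V) : Prop extends IsPartialModel H G b φ where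
  disjoint_discarded : ∀ w, Disjoint A (φ w)
  cutCard_le : cutCard G A (remainder A φ) ≤ β * A.ncard
  three_mul_ncard_le : 3 * A.ncard ≤ 2 * Nat.card V

/-- A pruned model with as many discarded vertices as possible and whose branch sets, for this set
of discarded vertices, cannot be enlarged. -/
structure IsMaximalPrunedModel (H : SimpleGraph W) (G : SimpleGraph V) (β : ℝ) (b : W → ℕ)
    (A : Set V) (φ : W → Set V) : Prop where
  ncard_le : ∀ A' φ', IsPrunedModel H G β b A' φ' → A'.ncard ≤ A.ncard
  maximal : Maximal (IsPrunedModel H G β b A) φ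

variable {H : SimpleGraph W} {G : SimpleGraph V} {α β : ℝ} {b : W → ℕ} {A S U : Set V}
  {φ ψ : W → Set V} {d D : ℕ}

theorem IsPartialModel.isMinor (h : IsPartialModel H G b φ) (hφ : ∀ w, (φ w).Nonempty) :
    IsMinor H G :=
  ⟨φ, fun w => h.connected w (hφ w), h.disjoint, fun u v huv => h.exists_adj u v huv (hφ u) (hφ v)⟩

theorem IsPartialModel.restrict (h : IsPartialModel H G b φ) (hψ : ∀ w, ψ w = φ w ∨ ψ w = ∅) :
    IsPartialModel H G b ψ where
  ncard_le w := by
    rcases hψ w with hw | hw <;> simp [hw, h.ncard_le w]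
  connected w hne := by
    have hw := (hψ w).resolve_right hne.ne_empty
    rw [hw] at hne ⊢
    exact h.connected w hne
  disjoint u v huv := by
    rcases hψ u with hu | hu <;> rcases hψ v with hv | hv <;> simp [hu, hv, h.disjoint u v huv]
  exists_adj u v huv hne hne' := by
    have hu := (hψ u).resolve_right hne.ne_empty
    have hv := (hψ v).resolve_right hne'.ne_empty
    rw [hu] at hne ⊢
    rw [hv] at hne' ⊢
    exact h.exists_adj u v huv hne hne'

theorem IsPartialModel.update [DecidableEq W] (h : IsPartialModel H G b φ) {w : W}
    (hcard : S.ncard ≤ b w) (hconn : (G.induce S).Connected) (hdisj : ∀ u, Disjoint S (φ u))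
    (hadj : ∀ u, H.Adj w u → (φ u).Nonempty → ∃ a ∈ S, ∃ b ∈ φ u, G.Adj a b) :
    IsPartialModel H G b (Function.update φ w S) where
  ncard_le u := by
    rcases eq_or_ne u w with rfl | hu <;> simp_all [h.ncard_le]
  connected u hne := by
    rcases eq_or_ne u w with rfl | hu
    · rwa [Function.update_self]
    · rw [Function.update_of_ne hu] at hne ⊢
      exact h.connected u hne
  disjoint u v huv := by
    rcases eq_or_ne u w with rfl | hu
    · simpa [huv.symm] using hdisj v
    rcases eq_or_ne v w with rfl | hv
    · simpa [hu] using (hdisj u).symm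
    · simpa [hu, hv] using h.disjoint u v huv
  exists_adj u v huv hne hne' := by
    rcases eq_or_ne u w with rfl | hu
    · rw [Function.update_self]
      rw [Function.update_of_ne huv.ne'] at hne' ⊢
      exact hadj v huv hne'
    rw [Function.update_of_ne hu] at hne ⊢
    rcases eq_or_ne v w with rfl | hv
    · rw [Function.update_self]
      obtain ⟨a, ha, c, hc, hac⟩ := hadj u huv.symm hne
      exact ⟨c, hc, a, ha, hac.symm⟩
    · rw [Function.update_of_ne hv] at hne' ⊢
      exact h.exists_adj u v huv hne hne'

theorem mem_remainder {v : V} : v ∈ remainder A φ ↔ v ∉ A ∧ ∀ w, v ∉ φ w := by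
  simp [remainder]

theorem disjoint_of_subset_remainder (hS : S ⊆ remainder A φ) :
    Disjoint A S ∧ ∀ w, Disjoint S (φ w) :=
  ⟨disjoint_right.2 fun _ hv => (mem_remainder.1 (hS hv)).1,
    fun w => disjoint_left.2 fun _ hv => (mem_remainder.1 (hS hv)).2 w⟩

theorem remainder_union (A U : Set V) (φ : W → Set V) :
    remainder (A ∪ U) φ = remainder A φ \ U := by
  ext v
  simp only [mem_remainder, mem_union, mem_sdiff]
  tauto

theorem remainder_union_update_empty [DecidableEq W] (A : Set V) (φ : W → Set V) (w : W) :
    remainder (A ∪ φ w) (Function.update φ w ∅) = remainder A φ := by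
  ext v
  simp only [mem_remainder, mem_union, not_or, and_assoc, and_congr_right_iff]
  refine fun _ => ⟨fun ⟨hw, h⟩ u => ?_, fun h => ⟨h w, fun u => ?_⟩⟩ <;>
    rcases eq_or_ne u w with rfl | hu
  · exact hw
  · simpa [hu] using h u
  · simp
  · simpa [hu] using h u

theorem remainder_anti (h : φ ≤ ψ) : remainder A ψ ⊆ remainder A φ :=
  compl_subset_compl.2 (union_subset_union_right A (iUnion_mono h))

theorem IsPartialModel.ncard_iUnion_le [Fintype W] (h : IsPartialModel H G b φ) :
    (⋃ w, φ w).ncard ≤ ∑ w, b w :=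
  (ncard_iUnion_le_of_fintype φ).trans (Finset.sum_le_sum fun w _ => h.ncard_le w)

theorem isPrunedModel_empty (H : SimpleGraph W) (G : SimpleGraph V) (β : ℝ) (b : W → ℕ) :
    IsPrunedModel H G β b ∅ fun _ => ∅ where
  ncard_le := by simp
  connected := by simp
  disjoint := by simp
  exists_adj := by simp
  disjoint_discarded := by simp
  cutCard_le := by simp [cutCard_eq_zero]
  three_mul_ncard_le := by simp

variable [Finite V]

theorem exists_isMaximalPrunedModel [Finite W] (H : SimpleGraph W) (G : SimpleGraph V) (β : ℝ)
    (b : W → ℕ) : ∃ A φ, IsMaximalPrunedModel H G β b A φ := by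
  obtain ⟨A, ⟨φ₀, hφ₀⟩, hA⟩ := exists_max_image {A | ∃ φ, IsPrunedModel H G β b A φ} ncard
    (toFinite _) ⟨∅, _, isPrunedModel_empty H G β b⟩
  obtain ⟨φ, hφ⟩ := Finite.exists_maximal (toFinite {φ | IsPrunedModel H G β b A φ}) ⟨φ₀, hφ₀⟩
  exact ⟨A, φ, fun A' φ' h => hA A' ⟨φ', h⟩, hφ⟩

theorem IsPrunedModel.six_mul_ncard_le [Fintype W] (h : IsPrunedModel H G (α / 4) b A φ)
    (hα : 0 < α) (hexp : IsExpander G α) (hdeg : DegLE G d)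
    (hb : 24 * d * ∑ w, (b w : ℝ) ≤ α * Nat.card V) : 6 * A.ncard ≤ Nat.card V := by
  have hcover : cutCard G A Aᶜ ≤ cutCard G A (remainder A φ) + d * ∑ w, b w :=
    calc cutCard G A Aᶜ
        ≤ cutCard G A (remainder A φ ∪ ⋃ w, φ w) :=
          cutCard_le_of_imp fun v hv u hu _ => ⟨hv, by
            simp only [mem_union, mem_remainder, mem_iUnion, mem_compl_iff] at hu ⊢
            grind⟩
      _ ≤ cutCard G A (remainder A φ) + cutCard G A (⋃ w, φ w) := cutCard_union_right_le ..
      _ ≤ cutCard G A (remainder A φ) + d * ∑ w, b w := by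
          gcongr
          exact (hdeg.cutCard_le_mul_right _ _).trans (by gcongr; exact h.ncard_iUnion_le)
  have hcover' : (cutCard G A Aᶜ : ℝ) ≤ cutCard G A (remainder A φ) + d * ∑ w, (b w : ℝ) := by
    exact_mod_cast hcover
  have hmul : α * (6 * A.ncard) ≤ α * Nat.card V := by
    linarith [h.cutCard_le, hexp.half_mul_ncard_le_cutCard hα.le h.three_mul_ncard_le]
  exact_mod_cast le_of_mul_le_mul_left hmul hα

theorem IsPrunedModel.discard (h : IsPrunedModel H G β b A φ)
    (hψ : ∀ w, ψ w = φ w ∨ ψ w = ∅) (hAU : Disjoint A U) (hUψ : ∀ w, Disjoint U (ψ w))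
    (hrem : remainder (A ∪ U) ψ ⊆ remainder A φ)
    (hcut : cutCard G U (remainder (A ∪ U) ψ) ≤ β * U.ncard)
    (hsmall : 3 * (A.ncard + U.ncard) ≤ 2 * Nat.card V) :
    IsPrunedModel H G β b (A ∪ U) ψ where
  toIsPartialModel := h.toIsPartialModel.restrict hψ
  disjoint_discarded w := by
    rw [disjoint_union_left]
    refine ⟨?_, hUψ w⟩
    rcases hψ w with hw | hw <;> simp [hw, h.disjoint_discarded w]
  cutCard_le := by
    have hA : cutCard G A (remainder (A ∪ U) ψ) ≤ cutCard G A (remainder A φ) :=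
      cutCard_le_of_imp fun _ ha _ hv _ => ⟨ha, hrem hv⟩
    calc (cutCard G (A ∪ U) (remainder (A ∪ U) ψ) : ℝ)
        ≤ cutCard G A (remainder A φ) + cutCard G U (remainder (A ∪ U) ψ) := by
          exact_mod_cast (cutCard_union_left_le ..).trans (Nat.add_le_add_right hA _)
      _ ≤ β * A.ncard + β * U.ncard := add_le_add h.cutCard_le hcut
      _ = β * (A ∪ U).ncard := by rw [ncard_union_eq hAU]; push_cast; ring
  three_mul_ncard_le := by rwa [ncard_union_eq hAU]

theorem IsPrunedModel.embed [DecidableEq W] (h : IsPrunedModel H G β b A φ) {w : W}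
    (hw : φ w = ∅) (hS : S ⊆ remainder A φ) (hcard : S.ncard ≤ b w)
    (hconn : (G.induce S).Connected)
    (hadj : ∀ u, H.Adj w u → (φ u).Nonempty → ∃ a ∈ S, ∃ b ∈ φ u, G.Adj a b) :
    IsPrunedModel H G β b A (Function.update φ w S) where
  toIsPartialModel :=
    h.toIsPartialModel.update hcard hconn (disjoint_of_subset_remainder hS).2 hadj
  disjoint_discarded u := by
    rcases eq_or_ne u w with rfl | hu
    · simpa using (disjoint_of_subset_remainder hS).1
    · simpa [hu] using h.disjoint_discarded u
  cutCard_le := by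
    have hrem : remainder A (Function.update φ w S) ⊆ remainder A φ :=
      remainder_anti (le_update_self_iff.2 (hw.trans_le (empty_subset S)))
    refine le_trans ?_ h.cutCard_le
    exact_mod_cast cutCard_le_of_imp fun _ ha _ hv _ => ⟨ha, hrem hv⟩
  three_mul_ncard_le := h.three_mul_ncard_le

theorem IsMaximalPrunedModel.not_isPrunedModel_union (h : IsMaximalPrunedModel H G β b A φ)
    (hAU : Disjoint A U) (hU : U.Nonempty) : ¬IsPrunedModel H G β b (A ∪ U) ψ := fun hψ => by
  have hle := h.ncard_le _ _ hψ
  rw [ncard_union_eq hAU] at hle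
  have := hU.ncard_pos
  omega

theorem IsMaximalPrunedModel.isExpander_induce_remainder (h : IsMaximalPrunedModel H G β b A φ)
    (hA : 6 * A.ncard ≤ Nat.card V) : IsExpander (G.induce (remainder A φ)) β := by
  refine isExpander_iff_forall_two_mul_ncard_le.2 fun U hU => ?_
  rcases U.eq_empty_or_nonempty with rfl | hne
  · simp
  by_contra! hcut
  have hsub : Subtype.val '' U ⊆ remainder A φ := Subtype.coe_image_subset _ U
  obtain ⟨hAU, hUφ⟩ := disjoint_of_subset_remainder hsub
  refine h.not_isPrunedModel_union hAU (hne.image _) (h.maximal.prop.discard (fun _ => .inl rfl)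
    hAU hUφ (remainder_union A _ φ ▸ sdiff_subset) ?_ ?_)
  · rw [remainder_union, ← image_val_compl, ncard_image_of_injective U Subtype.val_injective]
    exact (cutCard_image (SimpleGraph.Embedding.induce (remainder A φ)) U Uᶜ ▸ hcut).le
  · rw [ncard_image_of_injective U Subtype.val_injective]
    have := ncard_le_card (remainder A φ)
    rw [Nat.card_coe_set_eq] at hU
    omega

theorem IsMaximalPrunedModel.exists_adj_remainder (h : IsMaximalPrunedModel H G β b A φ)
    (hβ : 0 ≤ β) (hA : 6 * A.ncard ≤ Nat.card V) {w : W} (hw : (φ w).Nonempty)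
    (hφw : 2 * (φ w).ncard ≤ Nat.card V) : ∃ a ∈ φ w, ∃ v ∈ remainder A φ, G.Adj a v := by
  classical
  by_contra! hnadj
  have hAw := h.maximal.prop.disjoint_discarded w
  have hrem := remainder_union_update_empty A φ w
  refine h.not_isPrunedModel_union hAw hw (h.maximal.prop.discard
    (ψ := Function.update φ w ∅) (fun u => ?_) hAw (fun u => ?_) hrem.subset ?_ (by omega))
  · rcases eq_or_ne u w with rfl | hu
    · simp
    · simp [hu]
  · rcases eq_or_ne u w with rfl | hu
    · simp
    · simpa [hu] using h.maximal.prop.disjoint w u hu.symm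
  · rw [hrem, cutCard_eq_zero hnadj, Nat.cast_zero]
    positivity

theorem IsMaximalPrunedModel.nonempty [Finite W] (h : IsMaximalPrunedModel H G β b A φ)
    (hrem : (remainder A φ).Nonempty)
    (hadj : ∀ w, (φ w).Nonempty → ∃ a ∈ φ w, ∃ v ∈ remainder A φ, G.Adj a v)
    (hD : ∀ x y, (G.induce (remainder A φ)).edist x y ≤ D)
    (hb : ∀ w, D * (H.neighborSet w).ncard + 1 ≤ b w) (w : W) : (φ w).Nonempty := by
  classical
  by_contra hw
  rw [not_nonempty_iff_eq_empty] at hw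
  have : Nonempty V := ⟨hrem.some⟩
  choose! a ha v hv hav using hadj
  let N := {u ∈ H.neighborSet w | (φ u).Nonempty}
  have hvN : v '' N ⊆ remainder A φ := image_subset_iff.2 fun u hu => hv u hu.2
  have hNcard : (v '' N).ncard ≤ (H.neighborSet w).ncard :=
    (ncard_image_le (toFinite N)).trans (ncard_le_ncard (sep_subset _ _) (toFinite _))
  obtain ⟨S, hSrem, hvS, hcard, hconn⟩ := exists_connected_between_ncard_le hrem hvN hD
  have hcard' : S.ncard ≤ b w := hcard.trans (le_trans (by gcongr) (hb w))
  have hext : IsPrunedModel H G β b A (Function.update φ w S) :=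
    h.maximal.prop.embed hw hSrem hcard' hconn fun u hwu hu =>
      ⟨v u, hvS (mem_image_of_mem v ⟨hwu, hu⟩), a u, ha u hu, (hav u hu).symm⟩
  have hle : Function.update φ w S ≤ φ :=
    h.maximal.le_of_ge hext (le_update_self_iff.2 (hw.trans_le (empty_subset S)))
  have hS : S.Nonempty := nonempty_coe_sort.1 hconn.nonempty
  exact hS.ne_empty (subset_empty_iff.1 (hw ▸ update_le_self_iff.1 hle))

end PartialModels

section Parameters

theorem isMinor_of_isExpander_of_sum_le {V W : Type*} [Finite V] [Fintype W] {G : SimpleGraph V}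
    {H : SimpleGraph W} {α : ℝ} {d K : ℕ} (hα : 0 < α) (hV : 2 ≤ Nat.card V)
    (hexp : IsExpander G α) (hdeg : DegLE G d) (hK : Nat.card V < 2 * (1 + α / 4 / d) ^ K)
    (hb : 24 * d * ∑ w, ((2 * K * (H.neighborSet w).ncard + 1 : ℕ) : ℝ) ≤ α * Nat.card V) :
    IsMinor H G := by
  set b : W → ℕ := fun w => 2 * K * (H.neighborSet w).ncard + 1
  obtain ⟨A, φ, hmax⟩ := exists_isMaximalPrunedModel H G (α / 4) b
  have hpruned := hmax.maximal.prop
  have hA : 6 * A.ncard ≤ Nat.card V := hpruned.six_mul_ncard_le hα hexp hdeg hb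
  have hbranch : 24 * (⋃ w, φ w).ncard ≤ Nat.card V := by
    have hd := hexp.le_of_degLE hdeg hV
    have hsum : ((⋃ w, φ w).ncard : ℝ) ≤ ∑ w, (b w : ℝ) := by
      exact_mod_cast hpruned.ncard_iUnion_le
    have hmul : α * (24 * (⋃ w, φ w).ncard) ≤ α * Nat.card V :=
      calc α * (24 * (⋃ w, φ w).ncard) ≤ d * (24 * ∑ w, (b w : ℝ)) := by gcongr
        _ = 24 * d * ∑ w, (b w : ℝ) := by ring
        _ ≤ α * Nat.card V := hb
    exact_mod_cast le_of_mul_le_mul_left hmul hα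
  have hrem : (remainder A φ).Nonempty := by
    refine nonempty_of_ncard_ne_zero ?_
    have := ncard_add_ncard_compl (A ∪ ⋃ w, φ w)
    have := ncard_union_le A (⋃ w, φ w)
    rw [remainder]
    omega
  have hadj : ∀ w, (φ w).Nonempty → ∃ a ∈ φ w, ∃ v ∈ remainder A φ, G.Adj a v := fun w hw => by
    have := ncard_le_ncard (subset_iUnion φ w)
    exact hmax.exists_adj_remainder (by positivity) hA hw (by omega)
  have hdist : ∀ x y, (G.induce (remainder A φ)).edist x y ≤ (2 * K : ℕ) := by
    refine (hmax.isExpander_induce_remainder hA).edist_le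
      (hdeg.of_embedding (SimpleGraph.Embedding.induce _)) (by positivity) (lt_of_le_of_lt ?_ hK)
    exact_mod_cast (Nat.card_coe_set_eq (remainder A φ)).trans_le (ncard_le_card _)
  exact hpruned.isMinor (hmax.nonempty hrem hadj hdist fun _ => le_rfl)

theorem le_one_add_pow_ceil_logb_div {x ε : ℝ} (hx : 1 ≤ x) (hε : 0 < ε) (hε1 : ε ≤ 1) :
    x ≤ (1 + ε) ^ ⌈Real.logb 2 x / ε⌉₊ := by
  have hlog : 0 ≤ Real.logb 2 x := Real.logb_nonneg one_lt_two hx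
  have htwo : 2 ≤ (1 + ε) ^ (1 / ε) := by
    have := one_add_mul_self_le_rpow_one_add (s := ε) (by linarith) (p := 1 / ε)
      (by rwa [le_div_iff₀ hε, one_mul])
    rw [one_div_mul_cancel hε.ne'] at this
    linarith
  calc x = 2 ^ Real.logb 2 x := (Real.rpow_logb two_pos (by norm_num) (by linarith)).symm
    _ ≤ ((1 + ε) ^ (1 / ε)) ^ Real.logb 2 x := Real.rpow_le_rpow two_pos.le htwo hlog
    _ = (1 + ε) ^ (Real.logb 2 x / ε) := by
        rw [← Real.rpow_mul (by linarith), one_div_mul_eq_div]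
    _ ≤ (1 + ε) ^ (⌈Real.logb 2 x / ε⌉₊ : ℝ) :=
        Real.rpow_le_rpow_of_exponent_le (by linarith) (Nat.le_ceil _)
    _ = (1 + ε) ^ ⌈Real.logb 2 x / ε⌉₊ := Real.rpow_natCast _ _

theorem exists_nat_le_logb_div_and_le_one_add_pow {x ε : ℝ} (hx : 2 ≤ x) (hε : 0 < ε)
    (hε1 : ε ≤ 1) : ∃ K : ℕ, 1 ≤ K ∧ K ≤ 2 * Real.logb 2 x / ε ∧ x ≤ (1 + ε) ^ K := by
  have hlog : 1 ≤ Real.logb 2 x := by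
    rwa [Real.le_logb_iff_rpow_le one_lt_two (by linarith), Real.rpow_one]
  have hratio : 1 ≤ Real.logb 2 x / ε := by rw [le_div_iff₀ hε]; linarith
  refine ⟨⌈Real.logb 2 x / ε⌉₊, Nat.one_le_ceil_iff.2 (by positivity), ?_,
    le_one_add_pow_ceil_logb_div (by linarith) hε hε1⟩
  calc (⌈Real.logb 2 x / ε⌉₊ : ℝ) ≤ Real.logb 2 x / ε + 1 :=
        (Nat.ceil_lt_add_one (by positivity)).le
    _ ≤ Real.logb 2 x / ε + Real.logb 2 x / ε := by gcongr
    _ = 2 * Real.logb 2 x / ε := by ring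

theorem sum_mul_ncard_neighborSet_add_one_le {W : Type*} [Fintype W] (H : SimpleGraph W) {D : ℕ}
    (hD : 1 ≤ D) : ∑ w, (D * (H.neighborSet w).ncard + 1) ≤ 2 * D * gsize H := by
  classical
  have hdegree : ∀ w, (H.neighborSet w).ncard = H.degree w := fun w => by
    rw [← Nat.card_coe_set_eq, Nat.card_eq_fintype_card, H.card_neighborSet_eq_degree]
  calc ∑ w, (D * (H.neighborSet w).ncard + 1)
      = D * (2 * Nat.card H.edgeSet) + Nat.card W := by
        simp only [hdegree, Finset.sum_add_distrib, ← Finset.mul_sum,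
          H.sum_degrees_eq_twice_card_edges, Nat.card_eq_fintype_card,
          SimpleGraph.edgeFinset_card, Finset.sum_const, Finset.card_univ, smul_eq_mul, mul_one]
    _ ≤ 2 * D * gsize H := by
        rw [gsize]
        nlinarith

theorem large_minors_in_expanders_general {V W : Type*} [Finite V] [Finite W] (G : SimpleGraph V)
    (α : ℝ) (d : ℕ) (hα : 0 < α) (hV : 2 ≤ Nat.card V) (hexp : IsExpander G α) (hdeg : DegLE G d)
    (H : SimpleGraph W)
    (hH : gsize H ≤ Nat.card V / (768 * Real.logb 2 (Nat.card V)) * (α / d) ^ 2) :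
    IsMinor H G := by
  have := Fintype.ofFinite W
  set n := Nat.card V
  set L := Real.logb 2 n
  have hαd : α ≤ d := hexp.le_of_degLE hdeg hV
  have hd : (0 : ℝ) < d := hα.trans_le hαd
  have hn : (2 : ℝ) ≤ n := by exact_mod_cast hV
  have hL : 0 < L := Real.logb_pos one_lt_two (by linarith)
  obtain ⟨K, hK, hKle, hpow⟩ := exists_nat_le_logb_div_and_le_one_add_pow hn
    (ε := α / 4 / d) (by positivity) (by rw [div_le_one hd]; linarith)
  have hsum : ∑ w, ((2 * K * (H.neighborSet w).ncard + 1 : ℕ) : ℝ) ≤ 2 * (2 * K) * gsize H := by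
    exact_mod_cast sum_mul_ncard_neighborSet_add_one_le H (D := 2 * K) (by omega)
  refine isMinor_of_isExpander_of_sum_le (K := K) hα hV hexp hdeg (by linarith) ?_
  calc 24 * d * ∑ w, ((2 * K * (H.neighborSet w).ncard + 1 : ℕ) : ℝ)
      ≤ 24 * d * (2 * (2 * K) * gsize H) := by gcongr
    _ ≤ 24 * d * (2 * (2 * (2 * L / (α / 4 / d))) * (n / (768 * L) * (α / d) ^ 2)) := by gcongr
    _ = α * n := by field_simp; norm_num

end Parameters

/-- **Large minors in expanders.** There is a universal constant `c* > 0` such that for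
every real `0 < α < 1`, every integer `d ≥ 1`, and every `n`-vertex `α`-expander `G`
(`n ≥ 2`) whose maximum vertex degree is at most `d`, every graph `H` of size at most
`(n / (c* · log₂ n)) · (α/d)^{c*}` is a minor of `G`. -/
theorem large_minors_in_expanders :
    ∃ c : ℝ, 0 < c ∧
      ∀ (V : Type) [Fintype V] (G : SimpleGraph V) (α : ℝ) (d : ℕ),
        0 < α → α < 1 → 1 ≤ d →
        2 ≤ Nat.card V →
        IsExpander G α → DegLE G d →
        ∀ (W : Type) [Fintype W] (H : SimpleGraph W),
          (gsize H : ℝ) ≤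
            (Nat.card V : ℝ) / (c * Real.logb 2 (Nat.card V)) * (α / d) ^ c →
          IsMinor H G :=
  ⟨768, by norm_num, fun V _ G α d hα hα1 hd hV hexp hdeg W _ H hH => by
    have hd1 : (1 : ℝ) ≤ d := by exact_mod_cast hd
    have hlog : 0 ≤ Real.logb 2 (Nat.card V) :=
      Real.logb_nonneg one_lt_two (by exact_mod_cast one_le_two.trans hV)
    have hpow : (α / d) ^ (768 : ℝ) ≤ (α / d) ^ 2 := by
      rw [← Real.rpow_natCast]
      exact Real.rpow_le_rpow_of_exponent_ge (by positivity)
        (div_le_one_of_le₀ (hα1.le.trans hd1) (by positivity)) (by norm_num)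
    exact large_minors_in_expanders_general G α d hα hV hexp hdeg H (hH.trans (by gcongr))⟩
end

section
/- For every ε > 0 there exists a constant c_ε > 0 (depending only on ε) such that the probability that the random graph G ~ G(n, (1+ε)/n) contains every graph of size at most c_ε · n / log₂ n as a minor tends to 1 as n → ∞. -/
open Classical in
/-- The probability, under the Erdős–Rényi random graph model `G(n,p)` (each of the
`C(n,2)` possible edges present independently with probability `p`), of the set of
graphs on `Fin n` satisfying the predicate `P`. -/
noncomputable def erProb (n : ℕ) (p : ℝ) (P : SimpleGraph (Fin n) → Prop) : ℝ :=
  ∑ G ∈ Finset.univ.filter P,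
    p ^ (Nat.card G.edgeSet) * (1 - p) ^ (n.choose 2 - Nat.card G.edgeSet)

/-!
By sprinkling, `G(n, (1 + ε) / n)` is the union of independent random graphs
`G(n, (1 + ε / 2) / n)` and `G(n, q)` with `q ≥ ε / (2 n)`. Depth first search in the first graph
finds a path of linear length: a search whose stack stays short has queried so many non-edges that
an exponential potential, whose expectation no query increases, becomes exponentially large. Cut
the path into `6 b` blocks of `K` vertices, with `K` a large constant and `b` linear in `n`. A union
bound shows that, with high probability, the second graph has an edge between any `b` blocks and
any `b` others.

It remains to find `H` as a minor of a graph in which any two disjoint sets of `b` vertices are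
joined by an edge. Branch sets are added one at a time, keeping aside a set `D` of at most `b`
vertices with small boundary. If `D` is chosen as large as possible, the remaining vertices expand,
so any two of them are linked by a path with `O(log b)` vertices; hence all branch sets together
need `O(gsize H * log b)` vertices.
-/

section RandomSubset

variable {ι κ : Type*} {p : ℝ} {E : Finset ι}

/-- The expectation of `F` evaluated at the random subset of `E` that contains each element
independently with probability `p`. -/
noncomputable def subsetExpect (p : ℝ) (E : Finset ι) (F : Finset ι → ℝ) : ℝ :=
  ∑ A ∈ E.powerset, p ^ A.card * (1 - p) ^ (E.card - A.card) * F A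

open Classical in
/-- The probability that the random subset of `E` that contains each element independently with
probability `p` satisfies `P`. -/
noncomputable def subsetProb (p : ℝ) (E : Finset ι) (P : Finset ι → Prop) : ℝ :=
  subsetExpect p E fun A => if P A then 1 else 0

lemma subsetExpect_const (p : ℝ) (E : Finset ι) (c : ℝ) : subsetExpect p E (fun _ => c) = c := by
  rw [subsetExpect, ← Finset.sum_mul, Finset.sum_pow_mul_eq_add_pow]
  simp

lemma subsetExpect_linear (p : ℝ) (E : Finset ι) (a b : ℝ) (F G : Finset ι → ℝ) :
    subsetExpect p E (fun A => a * F A + b * G A) =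
      a * subsetExpect p E F + b * subsetExpect p E G := by
  simp only [subsetExpect, Finset.mul_sum, ← Finset.sum_add_distrib]
  exact Finset.sum_congr rfl fun A _ => by ring

lemma subsetExpect_sum (p : ℝ) (E : Finset ι) (s : Finset κ) (F : κ → Finset ι → ℝ) :
    subsetExpect p E (fun A => ∑ k ∈ s, F k A) = ∑ k ∈ s, subsetExpect p E (F k) := by
  simp only [subsetExpect, Finset.mul_sum]
  exact Finset.sum_comm

lemma subsetExpect_mono (hp0 : 0 ≤ p) (hp1 : p ≤ 1) {F G : Finset ι → ℝ}
    (h : ∀ A ⊆ E, F A ≤ G A) : subsetExpect p E F ≤ subsetExpect p E G := by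
  have : 0 ≤ 1 - p := sub_nonneg.2 hp1
  refine Finset.sum_le_sum fun A hA => ?_
  exact mul_le_mul_of_nonneg_left (h A (Finset.mem_powerset.1 hA)) (by positivity)

lemma subsetExpect_insert [DecidableEq ι] {e : ι} (he : e ∉ E) (F : Finset ι → ℝ) :
    subsetExpect p (insert e E) F =
      p * subsetExpect p E (fun A => F (insert e A)) + (1 - p) * subsetExpect p E F := by
  simp only [subsetExpect]
  rw [Finset.sum_powerset_insert he, add_comm, Finset.mul_sum, Finset.mul_sum]
  congr 1 <;> refine Finset.sum_congr rfl fun A hA => ?_ <;> have hAE := Finset.mem_powerset.1 hA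
  · rw [Finset.card_insert_of_notMem fun h => he (hAE h), Finset.card_insert_of_notMem he,
      Nat.add_sub_add_right]
    ring
  · rw [Finset.card_insert_of_notMem he, Nat.sub_add_comm (Finset.card_le_card hAE)]
    ring

lemma subsetExpect_union [DecidableEq ι] {p₁ p₂ : ℝ} (hp : 1 - p = (1 - p₁) * (1 - p₂))
    (E : Finset ι) (F : Finset ι → ℝ) :
    subsetExpect p E F = subsetExpect p₁ E fun A => subsetExpect p₂ E fun B => F (A ∪ B) := by
  obtain rfl : p = p₁ + p₂ - p₁ * p₂ := by linarith
  induction E using Finset.induction_on generalizing F with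
  | empty => simp [subsetExpect]
  | insert e E he ih =>
    simp only [subsetExpect_insert he, subsetExpect_linear, Finset.insert_union,
      Finset.union_insert, Finset.insert_idem, ih]
    ring

lemma subsetProb_nonneg (hp0 : 0 ≤ p) (hp1 : p ≤ 1) (P : Finset ι → Prop) :
    0 ≤ subsetProb p E P := by
  rw [← subsetExpect_const p E 0]
  exact subsetExpect_mono hp0 hp1 fun A _ => by split_ifs <;> norm_num

lemma subsetProb_le_one (hp0 : 0 ≤ p) (hp1 : p ≤ 1) (P : Finset ι → Prop) :
    subsetProb p E P ≤ 1 := by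
  rw [← subsetExpect_const p E 1]
  exact subsetExpect_mono hp0 hp1 fun A _ => by split_ifs <;> norm_num

lemma subsetProb_mono (hp0 : 0 ≤ p) (hp1 : p ≤ 1) {P Q : Finset ι → Prop}
    (h : ∀ A ⊆ E, P A → Q A) : subsetProb p E P ≤ subsetProb p E Q :=
  subsetExpect_mono hp0 hp1 fun A hA => by
    have := h A hA
    split_ifs <;> first | tauto | norm_num

lemma subsetProb_not (p : ℝ) (E : Finset ι) (P : Finset ι → Prop) :
    subsetProb p E (fun A => ¬ P A) = 1 - subsetProb p E P := by
  classical
  calc subsetProb p E (fun A => ¬ P A)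
      = subsetExpect p E fun A => 1 * 1 + -1 * if P A then 1 else 0 := by
        refine congrArg (subsetExpect p E) (funext fun A => ?_)
        by_cases h : P A <;> simp [h]
    _ = 1 - subsetProb p E P := by
        rw [subsetExpect_linear, subsetExpect_const, subsetProb]
        ring

lemma subsetProb_eq_zero {P : Finset ι → Prop} (h : ∀ A ⊆ E, ¬ P A) : subsetProb p E P = 0 :=
  Finset.sum_eq_zero fun A hA => by
    simp only [if_neg (h A (Finset.mem_powerset.1 hA)), mul_zero]

lemma subsetProb_insert [DecidableEq ι] {e : ι} (he : e ∉ E) (P : Finset ι → Prop) :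
    subsetProb p (insert e E) P =
      p * subsetProb p E (fun A => P (insert e A)) + (1 - p) * subsetProb p E P :=
  subsetExpect_insert he _

lemma subsetProb_exists_le (hp0 : 0 ≤ p) (hp1 : p ≤ 1) (s : Finset κ)
    (P : κ → Finset ι → Prop) :
    subsetProb p E (fun A => ∃ k ∈ s, P k A) ≤ ∑ k ∈ s, subsetProb p E (P k) := by
  classical
  simp only [subsetProb, ← subsetExpect_sum]
  refine subsetExpect_mono hp0 hp1 fun A _ => ?_
  split_ifs with h
  · obtain ⟨k, hk, hPk⟩ := h
    refine (if_pos hPk).ge.trans (Finset.single_le_sum (f := fun k => if P k A then (1 : ℝ) else 0)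
      (fun j _ => ?_) hk)
    split_ifs <;> norm_num
  · exact Finset.sum_nonneg fun j _ => by split_ifs <;> norm_num

lemma subsetProb_disjoint {Q : Finset ι} (hQ : Q ⊆ E) :
    subsetProb p E (fun A => Disjoint Q A) = (1 - p) ^ Q.card := by
  classical
  have hfilter : E.powerset.filter (Disjoint Q) = (E \ Q).powerset := by
    ext A
    simp only [Finset.mem_filter, Finset.mem_powerset, Finset.subset_sdiff, disjoint_comm]
  have hterm : ∀ A ∈ (E \ Q).powerset, p ^ A.card * (1 - p) ^ (E.card - A.card) =
      (1 - p) ^ Q.card * (p ^ A.card * (1 - p) ^ ((E \ Q).card - A.card)) := fun A hA => by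
    have hA' := Finset.card_le_card (Finset.mem_powerset.1 hA)
    have hQE := Finset.card_sdiff_add_card_eq_card hQ
    rw [show E.card - A.card = Q.card + ((E \ Q).card - A.card) by omega, pow_add]
    ring
  simp only [subsetProb, subsetExpect, mul_ite, mul_one, mul_zero]
  rw [← Finset.sum_filter, Finset.filter_congr_decidable, hfilter, Finset.sum_congr rfl hterm,
    ← Finset.mul_sum, Finset.sum_pow_mul_eq_add_pow]
  simp

lemma subsetProb_le_of_sprinkle [DecidableEq ι] {p₁ p₂ : ℝ} (hp : 1 - p = (1 - p₁) * (1 - p₂))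
    (hp₁0 : 0 ≤ p₁) (hp₁1 : p₁ ≤ 1) (hp₂0 : 0 ≤ p₂) (hp₂1 : p₂ ≤ 1) {P Q : Finset ι → Prop}
    {β : ℝ} (hβ : 0 ≤ β) (h : ∀ A ⊆ E, ¬ Q A → subsetProb p₂ E (fun B => P (A ∪ B)) ≤ β) :
    subsetProb p E P ≤ subsetProb p₁ E Q + β := by
  classical
  calc subsetProb p E P
      = subsetExpect p₁ E fun A => subsetProb p₂ E fun B => P (A ∪ B) := subsetExpect_union hp E _
    _ ≤ subsetExpect p₁ E fun A => 1 * (if Q A then 1 else 0) + β * 1 := by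
        refine subsetExpect_mono hp₁0 hp₁1 fun A hA => ?_
        split_ifs with hQ
        · linarith [subsetProb_le_one (E := E) hp₂0 hp₂1 fun B => P (A ∪ B)]
        · linarith [h A hA hQ]
    _ = subsetProb p₁ E Q + β := by
        rw [subsetExpect_linear, subsetExpect_const, one_mul, mul_one, subsetProb]

lemma erProb_eq_subsetProb (n : ℕ) (p : ℝ) (P : SimpleGraph (Fin n) → Prop) :
    erProb n p P = subsetProb p (⊤ : SimpleGraph (Fin n)).edgeFinset
      fun A => P (SimpleGraph.fromEdgeSet (A : Set (Sym2 (Fin n)))) := by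
  classical
  rw [erProb, subsetProb, subsetExpect, Finset.sum_filter]
  refine Finset.sum_bij' (fun G _ => G.edgeFinset)
    (fun A _ => SimpleGraph.fromEdgeSet (A : Set (Sym2 (Fin n)))) (fun G _ => ?_) (fun A _ => ?_)
    (fun G _ => ?_) (fun A hA => ?_) (fun G _ => ?_)
  · exact Finset.mem_powerset.2 (SimpleGraph.edgeFinset_mono le_top)
  · exact Finset.mem_univ _
  · simp
  · ext e
    have hloop (he : e ∈ A) := SimpleGraph.mem_edgeFinset.1 (Finset.mem_powerset.1 hA he)
    simp only [SimpleGraph.mem_edgeFinset, SimpleGraph.edgeSet_fromEdgeSet, Set.mem_sdiff,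
      Finset.mem_coe]
    exact ⟨And.left, fun he => ⟨he, SimpleGraph.not_isDiag_of_mem_edgeSet _ (hloop he)⟩⟩
  · rw [SimpleGraph.card_edgeFinset_top_eq_card_choose_two, Fintype.card_fin,
      Nat.card_eq_fintype_card, ← SimpleGraph.edgeFinset_card]
    simp

end RandomSubset

open scoped SimpleGraph

section DepthFirstSearch

variable {V : Type*}

/-- The unordered pairs with one element in `S` and the other in `T`. -/
def pairsBetween [DecidableEq V] (S T : Finset V) : Finset (Sym2 V) :=
  (S ×ˢ T).image fun x => s(x.1, x.2)

lemma mem_pairsBetween [DecidableEq V] {S T : Finset V} {e : Sym2 V} :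
    e ∈ pairsBetween S T ↔ ∃ x ∈ S, ∃ y ∈ T, s(x, y) = e := by
  simp only [pairsBetween, Finset.mem_image, Finset.mem_product, Prod.exists, and_assoc,
    exists_and_left]

lemma card_pairsBetween [DecidableEq V] {S T : Finset V} (hST : Disjoint S T) :
    (pairsBetween S T).card = S.card * T.card := by
  rw [pairsBetween, Finset.card_image_of_injOn, Finset.card_product]
  rintro ⟨x, y⟩ hxy ⟨x', y'⟩ hxy' heq
  simp only [Finset.coe_product, Set.mem_prod, Finset.mem_coe] at hxy hxy'
  rcases Sym2.eq_iff.1 heq with ⟨rfl, rfl⟩ | ⟨rfl, rfl⟩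
  · rfl
  · exact absurd hxy.1 (Finset.disjoint_right.1 hST hxy'.2)

lemma pathGraph_isContained_of_isChain {G : SimpleGraph V} {l : List V} {L : ℕ}
    (hchain : l.IsChain G.Adj) (hnodup : l.Nodup) (hL : L ≤ l.length) :
    SimpleGraph.pathGraph L ⊑ G := by
  refine ⟨⟨⟨fun i => l[i], fun {i j} hij => ?_⟩, fun i j hij => ?_⟩⟩
  · have hstep := List.isChain_iff_getElem.1 hchain
    rcases SimpleGraph.pathGraph_adj.1 hij with h | h
    · simpa [← h] using hstep i (by omega)
    · simpa [← h] using (hstep j (by omega)).symm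
  · exact Fin.ext ((hnodup.getElem_inj_iff ..).1 hij)

/-- A state of depth first search: `E` holds the pairs not queried so far, `A` and `Z` the queried
pairs that are edges and non-edges, `S` the vertices whose exploration is finished and `U` the stack
of active vertices. The vertices outside `S` and `U` are the unvisited ones. -/
structure IsDFSState (E A Z : Finset (Sym2 V)) (S : Finset V) (U : List V) : Prop where
  nodup : U.Nodup
  notMem_finished : ∀ u ∈ U, u ∉ S
  chain : U.IsChain (SimpleGraph.fromEdgeSet (A : Set (Sym2 V))).Adj
  card_le : A.card ≤ S.card + U.length
  finished : ∀ x ∈ S, ∀ y, y ∉ S → y ∉ U → s(x, y) ∈ Z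
  active : ∀ x ∈ U, ∀ y, y ∉ S → y ∉ U → s(x, y) ∈ E ∨ s(x, y) ∈ Z
  unvisited : ∀ x, x ∉ S → x ∉ U → ∀ y, y ∉ S → y ∉ U → x ≠ y → s(x, y) ∈ E
  disjoint_edges : Disjoint E A
  disjoint_nonedges : Disjoint E Z

namespace IsDFSState

variable {E A Z : Finset (Sym2 V)} {S : Finset V} {U : List V} {u v : V}

lemma initial [Fintype V] [DecidableEq V] :
    IsDFSState (⊤ : SimpleGraph V).edgeFinset ∅ ∅ ∅ [] := by
  constructor <;> simp

lemma pushRoot (h : IsDFSState E A Z S []) (hv : v ∉ S) : IsDFSState E A Z S [v] := by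
  obtain ⟨-, -, -, hcard, hfin, -, hunv, hEA, hEZ⟩ := h
  constructor <;> grind

lemma card_add_length_le [Fintype V] (h : IsDFSState E A Z S U) :
    S.card + U.length ≤ Fintype.card V := by
  classical
  have hdisj : Disjoint S U.toFinset :=
    Finset.disjoint_right.2 fun u hu => h.notMem_finished u (List.mem_toFinset.1 hu)
  rw [← List.toFinset_card_of_nodup h.nodup, ← Finset.card_union_of_disjoint hdisj]
  exact Finset.card_le_univ _

lemma card_mul_le [Fintype V] (h : IsDFSState E A Z S U) :
    S.card * (Fintype.card V - S.card - U.length) ≤ Z.card := by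
  classical
  have hdisj : Disjoint S (S ∪ U.toFinset)ᶜ :=
    disjoint_compl_right.mono_left Finset.subset_union_left
  have hcard : Fintype.card V - S.card - U.length ≤ (S ∪ U.toFinset)ᶜ.card := by
    have := Finset.card_union_le S U.toFinset
    have := List.toFinset_card_le U
    rw [Finset.card_compl]
    omega
  calc S.card * (Fintype.card V - S.card - U.length)
      ≤ S.card * (S ∪ U.toFinset)ᶜ.card := Nat.mul_le_mul_left _ hcard
    _ = (pairsBetween S (S ∪ U.toFinset)ᶜ).card :=
        (card_pairsBetween hdisj).symm
    _ ≤ Z.card := by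
        refine Finset.card_le_card fun e he => ?_
        obtain ⟨x, hx, y, hy, rfl⟩ := mem_pairsBetween.1 he
        simp only [Finset.mem_compl, Finset.mem_union, List.mem_toFinset, not_or] at hy
        exact h.finished x hx y hy.1 hy.2

variable [DecidableEq V]

lemma pop (h : IsDFSState E A Z S (u :: U)) (hu : ∀ v, v ∉ S → v ∉ u :: U → s(u, v) ∉ E) :
    IsDFSState E A Z (insert u S) U := by
  obtain ⟨hnodup, hS, hchain, hcard, hfin, hact, hunv, hEA, hEZ⟩ := h
  have hchain' := hchain.tail
  constructor <;> grind

lemma queryMissing (h : IsDFSState E A Z S (u :: U)) (v : V) :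
    IsDFSState (E.erase s(u, v)) A (insert s(u, v) Z) S (u :: U) where
  nodup := h.nodup
  notMem_finished := h.notMem_finished
  chain := h.chain
  card_le := h.card_le
  finished x hx y hyS hyU := Finset.mem_insert_of_mem (h.finished x hx y hyS hyU)
  active x hx y hyS hyU := by
    have := h.active x hx y hyS hyU
    grind only [= Finset.mem_erase, = Finset.mem_insert]
  unvisited x hxS hxU y hyS hyU hxy := by
    refine Finset.mem_erase.2 ⟨fun heq => ?_, h.unvisited x hxS hxU y hyS hyU hxy⟩
    grind
  disjoint_edges := h.disjoint_edges.mono_left (Finset.erase_subset _ _)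
  disjoint_nonedges := Finset.disjoint_insert_right.2
    ⟨Finset.notMem_erase _ _, h.disjoint_nonedges.mono_left (Finset.erase_subset _ _)⟩

lemma queryPresent (h : IsDFSState E A Z S (u :: U)) (hvS : v ∉ S) (hvU : v ∉ u :: U)
    (he : s(u, v) ∈ E) :
    IsDFSState (E.erase s(u, v)) (insert s(u, v) A) Z S (v :: u :: U) where
  nodup := List.nodup_cons.2 ⟨hvU, h.nodup⟩
  notMem_finished := List.forall_mem_cons.2 ⟨hvS, h.notMem_finished⟩
  chain := by
    refine List.isChain_cons_cons.2 ⟨?_, h.chain.imp fun x y hxy => ?_⟩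
    · have : v ≠ u := fun heq => hvU (heq ▸ List.mem_cons_self)
      simp [this, Sym2.eq_swap]
    · exact SimpleGraph.fromEdgeSet_mono (Finset.coe_subset.2 (Finset.subset_insert _ _)) hxy
  card_le := by
    have := h.card_le
    have := Finset.card_insert_le s(u, v) A
    simp only [List.length_cons] at *
    omega
  finished x hx y hyS hyU := h.finished x hx y hyS (List.not_mem_of_not_mem_cons hyU)
  active x hx y hyS hyU := by
    have := h.active x
    have := h.unvisited v
    grind
  unvisited x hxS hxU y hyS hyU hxy := by
    have := h.unvisited x
    grind
  disjoint_edges := Finset.disjoint_insert_right.2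
    ⟨Finset.notMem_erase _ _, h.disjoint_edges.mono_left (Finset.erase_subset _ _)⟩
  disjoint_nonedges := h.disjoint_nonedges.mono_left (Finset.erase_subset _ _)

end IsDFSState

variable {p a ρ : ℝ}

-- Querying one pair does not increase the expected potential, because `p * a + (1 - p) * ρ ≤ 1`.
lemma subsetProb_query_le {ι : Type*} [DecidableEq ι] (hp0 : 0 ≤ p) (hp1 : p ≤ 1) (ha : 0 ≤ a)
    (hρ : 0 ≤ ρ) (hstep : p * a + (1 - p) * ρ ≤ 1) {E A Z : Finset ι} {e : ι} (heE : e ∈ E)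
    (heA : e ∉ A) (heZ : e ∉ Z) {P : Finset ι → Prop} {w : ℝ}
    (hpresent : subsetProb p (E.erase e) (fun C => P (insert e A ∪ C)) * w ≤
      a ^ (insert e A).card * ρ ^ Z.card)
    (hmissing : subsetProb p (E.erase e) (fun C => P (A ∪ C)) * w ≤
      a ^ A.card * ρ ^ (insert e Z).card) :
    subsetProb p E (fun C => P (A ∪ C)) * w ≤ a ^ A.card * ρ ^ Z.card := by
  rw [Finset.card_insert_of_notMem heA] at hpresent
  rw [Finset.card_insert_of_notMem heZ] at hmissing
  have : 0 ≤ 1 - p := sub_nonneg.2 hp1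
  have hsplit := subsetProb_insert (p := p) (Finset.notMem_erase e E) fun C => P (A ∪ C)
  simp only [Finset.insert_erase heE, Finset.union_insert, ← Finset.insert_union] at hsplit
  rw [hsplit]
  calc _ = p * (subsetProb p (E.erase e) (fun C => P (insert e A ∪ C)) * w) +
        (1 - p) * (subsetProb p (E.erase e) (fun C => P (A ∪ C)) * w) := by ring
    _ ≤ p * (a ^ (A.card + 1) * ρ ^ Z.card) + (1 - p) * (a ^ A.card * ρ ^ (Z.card + 1)) := by
        gcongr
    _ = (p * a + (1 - p) * ρ) * (a ^ A.card * ρ ^ Z.card) := by ring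
    _ ≤ a ^ A.card * ρ ^ Z.card := mul_le_of_le_one_left (by positivity) hstep

/-- The graph with edge set `A` has no path on `L` vertices. -/
abbrev HasNoPath (L : ℕ) (A : Finset (Sym2 V)) : Prop :=
  ¬ SimpleGraph.pathGraph L ⊑ SimpleGraph.fromEdgeSet (A : Set (Sym2 V))

lemma IsDFSState.subsetProb_hasNoPath_mul_le [Fintype V] [DecidableEq V] (hp0 : 0 ≤ p) (hp1 : p ≤ 1)
    (ha0 : 0 ≤ a) (ha1 : a ≤ 1) (hρ : 1 ≤ ρ) (hstep : p * a + (1 - p) * ρ ≤ 1) {s L : ℕ}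
    (hn : s + L < Fintype.card V) {E A Z : Finset (Sym2 V)} {S : Finset V} {U : List V}
    (h : IsDFSState E A Z S U) (hS : S.card ≤ s) :
    subsetProb p E (fun C => HasNoPath L (A ∪ C)) *
      (a ^ (s + L) * ρ ^ (s * (Fintype.card V - s - L))) ≤ a ^ A.card * ρ ^ Z.card := by
  induction hk : E.card + (2 * Fintype.card V - (2 * S.card + U.length)) using
    Nat.strong_induction_on generalizing E A Z S U with | _ k ih
  have hcard := h.card_add_length_le
  rcases le_or_gt L U.length with hL | hL
  · have hpath (C : Finset (Sym2 V)) : ¬ HasNoPath L (A ∪ C) := fun hC => hC <|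
      pathGraph_isContained_of_isChain (h.chain.imp fun x y hxy => SimpleGraph.fromEdgeSet_mono
        (Finset.coe_subset.2 Finset.subset_union_left) hxy) h.nodup hL
    rw [subsetProb_eq_zero fun C _ => hpath C, zero_mul]
    positivity
  rcases hS.eq_or_lt with hSs | hSs
  · have hZ := h.card_mul_le
    have hA := h.card_le
    refine (mul_le_of_le_one_left (by positivity) (subsetProb_le_one hp0 hp1 _)).trans ?_
    refine mul_le_mul (pow_le_pow_of_le_one ha0 ha1 (by omega)) (pow_le_pow_right₀ hρ ?_)
      (by positivity) (by positivity)
    exact (Nat.mul_le_mul hSs.ge (by omega)).trans hZ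
  rcases U with _ | ⟨u, U⟩
  · obtain ⟨v, hv⟩ : ∃ v, v ∉ S := by
      by_contra! hall
      rw [Finset.eq_univ_iff_forall.2 hall, Finset.card_univ] at hSs
      omega
    exact ih _ (by simp only [List.length_cons, List.length_nil] at *; omega) (h.pushRoot hv) hS rfl
  simp only [List.length_cons] at *
  by_cases hquery : ∃ v, v ∉ S ∧ v ∉ u :: U ∧ s(u, v) ∈ E
  · obtain ⟨v, hvS, hvU, he⟩ := hquery
    have hE := Finset.card_erase_add_one he
    refine subsetProb_query_le hp0 hp1 ha0 (zero_le_one.trans hρ) hstep he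
      (Finset.disjoint_left.1 h.disjoint_edges he) (Finset.disjoint_left.1 h.disjoint_nonedges he)
      (ih _ ?_ (h.queryPresent hvS hvU he) hS rfl) (ih _ ?_ (h.queryMissing v) hS rfl)
    all_goals simp only [List.length_cons]; omega
  · push Not at hquery
    have hu := Finset.card_insert_of_notMem (h.notMem_finished u List.mem_cons_self)
    exact ih _ (by omega) (h.pop hquery) (by omega) rfl

lemma subsetProb_hasNoPath_mul_le [Fintype V] [DecidableEq V] (hp0 : 0 ≤ p) (hp1 : p ≤ 1)
    (ha0 : 0 ≤ a) (ha1 : a ≤ 1) (hρ : 1 ≤ ρ) (hstep : p * a + (1 - p) * ρ ≤ 1) {s L : ℕ}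
    (hn : s + L < Fintype.card V) :
    subsetProb p (⊤ : SimpleGraph V).edgeFinset (HasNoPath L) *
      (a ^ (s + L) * ρ ^ (s * (Fintype.card V - s - L))) ≤ 1 := by
  simpa only [Finset.empty_union, Finset.card_empty, pow_zero, mul_one] using
    IsDFSState.initial.subsetProb_hasNoPath_mul_le hp0 hp1 ha0 ha1 hρ hstep hn (Nat.zero_le s)

end DepthFirstSearch

section DepthFirstSearchEstimates

lemma exp_div_one_add_le {x : ℝ} (hx : -1 < x) : Real.exp (x / (1 + x)) ≤ 1 + x := by
  have hpos : 0 < 1 + x := by linarith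
  have hlog := Real.one_sub_inv_le_log_of_pos hpos
  rw [show x / (1 + x) = 1 - (1 + x)⁻¹ by field_simp; ring]
  exact (Real.le_log_iff_exp_le hpos).1 hlog

lemma exp_neg_mul_le_one_sub {η : ℝ} (h1 : η ≤ 1 / 2) :
    Real.exp (-(η * (1 + 2 * η))) ≤ 1 - η := by
  have hle := exp_div_one_add_le (x := -η) (by linarith)
  rw [← sub_eq_add_neg] at hle
  refine (Real.exp_le_exp.2 ?_).trans hle
  rw [le_div_iff₀ (by linarith)]
  nlinarith [mul_nonneg (sq_nonneg η) (by linarith : 0 ≤ 1 - 2 * η)]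

lemma exp_mul_one_sub_le_one_add {x η : ℝ} (h0 : 0 ≤ x) (hxη : x ≤ η) :
    Real.exp (x * (1 - η)) ≤ 1 + x := by
  refine (Real.exp_le_exp.2 ?_).trans (exp_div_one_add_le (by linarith))
  rw [le_div_iff₀ (by linarith)]
  nlinarith [mul_nonneg h0 h0, mul_nonneg h0 (sub_nonneg.2 hxη),
    mul_nonneg (mul_nonneg h0 h0) (h0.trans hxη)]

lemma dfs_exponent_le {ε η p n s L : ℝ} (hη0 : 0 < η) (hη1 : η ≤ 1 / 10) (hηε : 10 * η ≤ ε)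
    (hn : 0 ≤ n) (hp : p * n = 1 + ε) (hs : η * n ≤ s) (hsL : s + L ≤ η * n * (1 + 2 * η)) :
    η ^ 3 * n + η * (1 + 2 * η) * (s + L) ≤ p * η * (1 - η) * (s * (n - (s + L))) := by
  have hrest : n * (1 - η - 2 * η ^ 2) ≤ n - (s + L) := by linarith
  have hrest0 : 0 ≤ 1 - η - 2 * η ^ 2 := by nlinarith
  have hp0 : 0 ≤ p := by
    by_contra! hneg
    nlinarith
  have hpoly : (1 + 2 * η) ^ 2 + η ≤ (1 + 10 * η) * ((1 - η) * (1 - η - 2 * η ^ 2)) := by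
    nlinarith [mul_nonneg hη0.le (sub_nonneg.2 hη1), mul_pos (mul_pos hη0 hη0) hη0,
      mul_nonneg (mul_nonneg hη0.le hη0.le) (sub_nonneg.2 hη1), sq_nonneg (η ^ 2)]
  have hη1' : 0 ≤ 1 - η := by linarith
  have hs0 : 0 ≤ s := le_trans (by positivity) hs
  calc η ^ 3 * n + η * (1 + 2 * η) * (s + L)
      ≤ η ^ 3 * n + η * (1 + 2 * η) * (η * n * (1 + 2 * η)) := by gcongr
    _ = η ^ 2 * n * ((1 + 2 * η) ^ 2 + η) := by ring
    _ ≤ η ^ 2 * n * ((1 + 10 * η) * ((1 - η) * (1 - η - 2 * η ^ 2))) := by gcongr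
    _ ≤ η ^ 2 * n * (p * n * ((1 - η) * (1 - η - 2 * η ^ 2))) := by
        rw [hp]
        gcongr
    _ = p * η * (1 - η) * (η * n * (n * (1 - η - 2 * η ^ 2))) := by ring
    _ ≤ p * η * (1 - η) * (s * (n - (s + L))) := by gcongr

lemma exp_le_dfs_potential {ε η p : ℝ} {n s L : ℕ} (hη0 : 0 < η) (hη1 : η ≤ 1 / 10)
    (hηε : 10 * η ≤ ε) (hp0 : 0 ≤ p) (hp1 : p ≤ 1) (hp : p * n = 1 + ε) (hs : η * n ≤ s)
    (hsL : s + L ≤ η * n * (1 + 2 * η)) (hsLn : s + L ≤ n) :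
    Real.exp (η ^ 3 * n) ≤ (1 - η) ^ (s + L) * (1 + p * η) ^ (s * (n - s - L)) := by
  have hη1' : 0 ≤ 1 - η := by linarith
  have hcast : ((n - s - L : ℕ) : ℝ) = n - (s + L) := by
    rw [Nat.sub_sub, Nat.cast_sub hsLn, Nat.cast_add]
  have hexp := dfs_exponent_le hη0 hη1 hηε n.cast_nonneg hp hs hsL
  calc Real.exp (η ^ 3 * n)
      ≤ Real.exp (-(η * (1 + 2 * η))) ^ (s + L) *
          Real.exp (p * η * (1 - η)) ^ (s * (n - s - L)) := by
        rw [← Real.exp_nat_mul, ← Real.exp_nat_mul, ← Real.exp_add, Real.exp_le_exp]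
        push_cast [hcast]
        linarith
    _ ≤ (1 - η) ^ (s + L) * (1 + p * η) ^ (s * (n - s - L)) := by
        gcongr
        · exact exp_neg_mul_le_one_sub (by linarith)
        · exact exp_mul_one_sub_le_one_add (by positivity) (mul_le_of_le_one_left hη0.le hp1)

lemma exists_subsetProb_hasNoPath_le {ε : ℝ} (hε : 0 < ε) :
    ∃ δ : ℝ, 0 < δ ∧ δ ≤ 1 ∧ ∃ c : ℝ, 0 < c ∧ ∀ᶠ n : ℕ in Filter.atTop, ∀ L : ℕ, L ≤ δ * n →
      subsetProb ((1 + ε) / n) (⊤ : SimpleGraph (Fin n)).edgeFinset (HasNoPath L) ≤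
        Real.exp (-(c * n)) := by
  obtain ⟨η, hη0, hη1, hηε⟩ : ∃ η : ℝ, 0 < η ∧ η ≤ 1 / 10 ∧ 10 * η ≤ ε :=
    ⟨min ε 1 / 10, by positivity, by linarith [min_le_right ε 1], by linarith [min_le_left ε 1]⟩
  refine ⟨η ^ 2, by positivity, by nlinarith, η ^ 3, by positivity, ?_⟩
  have hlarge : ∀ᶠ n : ℕ in Filter.atTop, max (1 + ε) (1 / η ^ 2) ≤ (n : ℝ) :=
    tendsto_natCast_atTop_atTop.eventually_ge_atTop _
  filter_upwards [hlarge] with n hn L hL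
  obtain ⟨hnε, hnη⟩ := max_le_iff.1 hn
  have hn0 : (0 : ℝ) < n := by linarith
  have hηn : 1 ≤ η ^ 2 * n := by rwa [div_le_iff₀' (by positivity)] at hnη
  have hp1 : (1 + ε) / n ≤ 1 := (div_le_one hn0).2 hnε
  have hsL : (⌈η * n⌉₊ : ℝ) + L ≤ η * n * (1 + 2 * η) := by
    linarith [(Nat.ceil_lt_add_one (by positivity : 0 ≤ η * n)).le]
  have hsLn : ⌈η * n⌉₊ + L < n := by
    exact_mod_cast (show (⌈η * n⌉₊ : ℝ) + L < n by nlinarith)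
  have hstep : (1 + ε) / n * (1 - η) + (1 - (1 + ε) / n) * (1 + (1 + ε) / n * η) ≤ 1 := by
    nlinarith [mul_nonneg (sq_nonneg ((1 + ε) / n)) hη0.le]
  have hdfs := subsetProb_hasNoPath_mul_le (V := Fin n) (L := L) (by positivity) hp1
    (by linarith : 0 ≤ 1 - η) (by linarith) (le_add_of_nonneg_right (by positivity)) hstep
    (by simpa using hsLn)
  rw [Fintype.card_fin] at hdfs
  rw [Real.exp_neg, ← one_div, le_div_iff₀ (Real.exp_pos _)]
  refine le_trans (mul_le_mul_of_nonneg_left ?_ ?_) hdfs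
  · exact exp_le_dfs_potential hη0 hη1 hηε (by positivity) hp1 (div_mul_cancel₀ _ hn0.ne')
      (Nat.le_ceil _) hsL hsLn.le
  · exact subsetProb_nonneg (by positivity) hp1 _

end DepthFirstSearchEstimates

section Linking

variable {V : Type*} {G : SimpleGraph V} {R S T : Finset V} {b k l r : ℕ} {x y : V}

/-- The set `T` is *linkable* inside `R` at cost `k` if some set of at most `k` vertices of `R`
contains `T` and induces a connected subgraph. -/
def IsLinkable (G : SimpleGraph V) (R : Finset V) (k : ℕ) (T : Finset V) : Prop :=
  ∃ C ⊆ R, T ⊆ C ∧ C.card ≤ k ∧ (G.induce (C : Set V)).Connected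

/-- A graph is *joined* at scale `b` if there is an edge between any two disjoint sets of at least
`b` vertices. -/
def IsJoined (G : SimpleGraph V) (b : ℕ) : Prop :=
  ∀ X Y : Finset V, Disjoint X Y → b ≤ X.card → b ≤ Y.card → ∃ x ∈ X, ∃ y ∈ Y, G.Adj x y

lemma IsLinkable.mono (hT : IsLinkable G R k T) (hkl : k ≤ l) (hST : S ⊆ T) :
    IsLinkable G R l S := by
  obtain ⟨C, hCR, hTC, hCk, hC⟩ := hT
  exact ⟨C, hCR, hST.trans hTC, hCk.trans hkl, hC⟩

lemma isLinkable_singleton (hx : x ∈ R) : IsLinkable G R 1 {x} := by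
  refine ⟨{x}, Finset.singleton_subset_iff.2 hx, subset_rfl, (Finset.card_singleton x).le, ?_⟩
  rw [Finset.coe_singleton]
  exact { preconnected := .of_subsingleton }

variable [DecidableEq V]

lemma IsLinkable.union (hS : IsLinkable G R k S) (hT : IsLinkable G R l T)
    (hxS : x ∈ S) (hxT : x ∈ T) : IsLinkable G R (k + l) (S ∪ T) := by
  obtain ⟨C, hCR, hSC, hCk, hC⟩ := hS
  obtain ⟨D, hDR, hTD, hDl, hD⟩ := hT
  refine ⟨C ∪ D, Finset.union_subset hCR hDR, Finset.union_subset_union hSC hTD,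
    (Finset.card_union_le C D).trans (add_le_add hCk hDl), ?_⟩
  rw [Finset.coe_union]
  exact SimpleGraph.induce_union_connected hC.preconnected hD.preconnected
    ⟨x, hSC hxS, hTD hxT⟩

lemma IsLinkable.union_of_adj (hS : IsLinkable G R k S) (hT : IsLinkable G R l T)
    (hx : x ∈ S) (hy : y ∈ T) (hxy : G.Adj x y) : IsLinkable G R (k + l) (S ∪ T) := by
  obtain ⟨C, hCR, hSC, hCk, hC⟩ := hS
  obtain ⟨D, hDR, hTD, hDl, hD⟩ := hT
  refine ⟨C ∪ D, Finset.union_subset hCR hDR, Finset.union_subset_union hSC hTD,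
    (Finset.card_union_le C D).trans (add_le_add hCk hDl), ?_⟩
  rw [Finset.coe_union]
  exact SimpleGraph.connected_induce_union hC.preconnected hD.preconnected (hSC hx) (hTD hy) hxy

variable [DecidableRel G.Adj]

/-- The *boundary* of `X` in `R`: the vertices of `R` outside `X` with a neighbour in `X`. -/
def boundaryIn (G : SimpleGraph V) [DecidableRel G.Adj] (R X : Finset V) : Finset V :=
  {y ∈ R | y ∉ X ∧ ∃ x ∈ X, G.Adj x y}

lemma mem_boundaryIn {X : Finset V} :
    y ∈ boundaryIn G R X ↔ y ∈ R ∧ y ∉ X ∧ ∃ x ∈ X, G.Adj x y :=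
  Finset.mem_filter

/-- `G` *expands* on `R` up to size `b` if every nonempty `X ⊆ R` with at most `b` vertices has
more than `|X|` boundary vertices in `R`. -/
def ExpandsOn (G : SimpleGraph V) [DecidableRel G.Adj] (R : Finset V) (b : ℕ) : Prop :=
  ∀ X ⊆ R, X.Nonempty → X.card ≤ b → X.card < (boundaryIn G R X).card

lemma ExpandsOn.exists_ball (hexp : ExpandsOn G R b) (hx : x ∈ R) (j : ℕ) :
    ∃ X ⊆ R, X.Nonempty ∧ (2 ^ j ≤ X.card ∨ b ≤ X.card) ∧
      ∀ y ∈ X, IsLinkable G R (j + 1) {x, y} := by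
  induction j with
  | zero =>
    refine ⟨{x}, Finset.singleton_subset_iff.2 hx, Finset.singleton_nonempty x,
      Or.inl (Finset.card_singleton x).ge, fun y hy => ?_⟩
    rw [Finset.mem_singleton.1 hy, Finset.pair_eq_singleton]
    exact isLinkable_singleton hx
  | succ j ih =>
    obtain ⟨X, hXR, hXne, hXcard, hX⟩ := ih
    have hdisj : Disjoint X (boundaryIn G R X) :=
      Finset.disjoint_right.2 fun y hy => (mem_boundaryIn.1 hy).2.1
    refine ⟨X ∪ boundaryIn G R X, Finset.union_subset hXR (Finset.filter_subset _ _),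
      hXne.mono Finset.subset_union_left, ?_, fun y hy => ?_⟩
    · rw [Finset.card_union_of_disjoint hdisj, pow_succ]
      have hgrow := hexp X hXR hXne
      omega
    · rcases Finset.mem_union.1 hy with hyX | hyX
      · exact (hX y hyX).mono (Nat.le_succ _) subset_rfl
      · obtain ⟨hyR, -, z, hzX, hzy⟩ := mem_boundaryIn.1 hyX
        refine ((hX z hzX).union_of_adj (isLinkable_singleton hyR) (by simp)
          (Finset.mem_singleton_self y) hzy).mono le_rfl ?_
        grind

lemma ExpandsOn.isLinkable_pair (hexp : ExpandsOn G R b) (hG : IsJoined G b) (hr : b ≤ 2 ^ r)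
    (hx : x ∈ R) (hy : y ∈ R) : IsLinkable G R (2 * r + 2) {x, y} := by
  obtain ⟨X, -, -, hXcard, hX⟩ := hexp.exists_ball hx r
  obtain ⟨Y, -, -, hYcard, hY⟩ := hexp.exists_ball hy r
  have hsub (u v : V) : ({x, y} : Finset V) ⊆ {x, u} ∪ {y, v} := by grind
  by_cases hdisj : Disjoint X Y
  · obtain ⟨u, hu, v, hv, huv⟩ := hG X Y hdisj (by omega) (by omega)
    exact ((hX u hu).union_of_adj (hY v hv) (by simp) (by simp) huv).mono (by omega) (hsub u v)
  · obtain ⟨u, huX, huY⟩ := Finset.not_disjoint_iff.1 hdisj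
    exact ((hX u huX).union (hY u huY) (x := u) (by simp) (by simp)).mono (by omega) (hsub u u)

lemma ExpandsOn.isLinkable_insert (hexp : ExpandsOn G R b) (hG : IsJoined G b) (hr : b ≤ 2 ^ r)
    (hx : x ∈ R) (hT : T ⊆ R) : IsLinkable G R ((T.card + 1) * (2 * r + 2)) (insert x T) := by
  induction T using Finset.induction_on with
  | empty => exact (isLinkable_singleton hx).mono (by simp) (by simp)
  | insert y T hyT ih =>
    obtain ⟨hyR, hTR⟩ := Finset.insert_subset_iff.1 hT
    refine ((ih hTR).union (hexp.isLinkable_pair hG hr hx hyR) (x := x) (by simp)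
      (by simp)).mono ?_ (by grind)
    rw [Finset.card_insert_of_notMem hyT]
    linarith

end Linking

section Bottleneck

variable {V : Type*} [Fintype V] [DecidableEq V] {G : SimpleGraph V} [DecidableRel G.Adj]
  {b : ℕ} {D T U X : Finset V}

/-- A *bottleneck* relative to a set `U` of used vertices: a set of at most `b` unused vertices
with no more boundary vertices outside `U` than it has elements. The embedding of a minor avoids a
bottleneck that is as large as possible, so that the remaining vertices expand. -/
structure IsBottleneck (G : SimpleGraph V) [DecidableRel G.Adj] (b : ℕ) (U D : Finset V) :
    Prop where
  disjoint : Disjoint U D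
  card_le : D.card ≤ b
  card_boundary_le : (boundaryIn G Uᶜ D).card ≤ D.card

lemma isBottleneck_empty : IsBottleneck G b U ∅ :=
  ⟨Finset.disjoint_empty_right U, Nat.zero_le b, by simp [boundaryIn]⟩

lemma IsBottleneck.mono (hD : IsBottleneck G b U D) (hUT : U ⊆ T) (hTD : Disjoint T D) :
    IsBottleneck G b T D :=
  ⟨hTD, hD.card_le, (Finset.card_le_card (Finset.filter_subset_filter _
    (Finset.compl_subset_compl.2 hUT))).trans hD.card_boundary_le⟩

/-- If `D` had more than `b` elements, it would be joined to the at least `b` vertices outside `U`,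
`D` and the boundary of `D`. -/
lemma IsJoined.isBottleneck (hG : IsJoined G b) (hV : 6 * b ≤ Fintype.card V) (hU : U.card ≤ b)
    (hUD : Disjoint U D) (hD : D.card ≤ 2 * b) (hbd : (boundaryIn G Uᶜ D).card ≤ D.card) :
    IsBottleneck G b U D := by
  refine ⟨hUD, ?_, hbd⟩
  by_contra! hlt
  set Y := (D ∪ boundaryIn G Uᶜ D ∪ U)ᶜ with hY
  have hYcard : b ≤ Y.card := by
    have hcard₁ := Finset.card_union_le (D ∪ boundaryIn G Uᶜ D) U
    have hcard₂ := Finset.card_union_le D (boundaryIn G Uᶜ D)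
    rw [hY, Finset.card_compl]
    omega
  have hDY : Disjoint D Y :=
    Finset.disjoint_right.2 fun y hy hyD => by simp [hY, hyD] at hy
  obtain ⟨x, hx, y, hy, hxy⟩ := hG D Y hDY hlt.le hYcard
  simp only [hY, Finset.mem_compl, Finset.mem_union, not_or, mem_boundaryIn] at hy
  exact hy.1.2 ⟨hy.2, hy.1.1, x, hx, hxy⟩

lemma IsBottleneck.union_of_card_boundary_le (hD : IsBottleneck G b U D) (hG : IsJoined G b)
    (hV : 6 * b ≤ Fintype.card V) (hU : U.card ≤ b) (hX : X ⊆ (U ∪ D)ᶜ) (hXb : X.card ≤ b)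
    (hXbd : (boundaryIn G (U ∪ D)ᶜ X).card ≤ X.card) : IsBottleneck G b U (D ∪ X) := by
  have hUDX : Disjoint (U ∪ D) X := Finset.subset_compl_iff_disjoint_left.1 hX
  obtain ⟨hUX, hDX⟩ := Finset.disjoint_union_left.1 hUDX
  have hbd : boundaryIn G Uᶜ (D ∪ X) ⊆ boundaryIn G Uᶜ D ∪ boundaryIn G (U ∪ D)ᶜ X := by
    intro y
    simp only [mem_boundaryIn, Finset.mem_union, Finset.mem_compl]
    grind
  have hD_bd := hD.card_boundary_le
  have hD_card := hD.card_le
  have hcard := (Finset.card_le_card hbd).trans (Finset.card_union_le _ _)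
  refine hG.isBottleneck hV hU (Finset.disjoint_union_right.2 ⟨hD.disjoint, hUX⟩) ?_ ?_ <;>
    rw [Finset.card_union_of_disjoint hDX] <;> omega

lemma IsBottleneck.union_of_not_adj (hD : IsBottleneck G b U D) (hG : IsJoined G b)
    (hV : 6 * b ≤ Fintype.card V) (hU : U.card ≤ b) (hTU : T ⊆ U)
    (hT : ∀ x ∈ T, ∀ y ∈ (U ∪ D)ᶜ, ¬ G.Adj x y) : IsBottleneck G b (U \ T) (D ∪ T) := by
  have : Disjoint T D := hD.disjoint.mono_left hTU
  have hbd : boundaryIn G (U \ T)ᶜ (D ∪ T) ⊆ boundaryIn G Uᶜ D := by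
    intro y
    simp only [mem_boundaryIn, Finset.mem_union, Finset.mem_compl, Finset.mem_sdiff] at hT ⊢
    grind
  have hDT := Finset.card_union_le D T
  have hT_card := Finset.card_le_card hTU
  have hD_card := hD.card_le
  refine hG.isBottleneck hV ((Finset.card_le_card Finset.sdiff_subset).trans hU)
    (Finset.disjoint_union_right.2
      ⟨hD.disjoint.mono_left Finset.sdiff_subset, Finset.sdiff_disjoint⟩) (by omega) ?_
  exact (Finset.card_le_card hbd).trans
    (hD.card_boundary_le.trans (Finset.card_le_card Finset.subset_union_left))

end Bottleneck

section Embedding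

lemma biUnion_insert_update {V W : Type*} [DecidableEq V] [DecidableEq W] {S : Finset W} {v : W}
    (hv : v ∉ S) (B : W → Finset V) (C : Finset V) :
    (insert v S).biUnion (Function.update B v C) = C ∪ S.biUnion B := by
  rw [Finset.biUnion_insert, Function.update_self]
  congr 1
  exact Finset.biUnion_congr rfl fun u hu =>
    Function.update_of_ne (ne_of_mem_of_not_mem hu hv) C B

variable {V W : Type*} [Fintype W] {H : SimpleGraph W} [DecidableRel H.Adj]
  {G : SimpleGraph V} {ℓ : ℕ} {S T : Finset W} {B : W → Finset V} {C : Finset V} {v : W}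

/-- A *partial minor embedding*: the sets `B w`, `w ∈ S`, are branch sets of a minor embedding in
`G` of the subgraph of `H` induced on `S`, where `B w` has at most `(deg w + 1) * ℓ` vertices. The
values of `B` outside `S` are irrelevant. -/
structure IsPartialEmbedding (H : SimpleGraph W) [DecidableRel H.Adj] (G : SimpleGraph V) (ℓ : ℕ)
    (S : Finset W) (B : W → Finset V) : Prop where
  connected : ∀ w ∈ S, (G.induce (B w : Set V)).Connected
  pairwiseDisjoint : (S : Set W).PairwiseDisjoint B
  exists_adj : ∀ u ∈ S, ∀ v ∈ S, H.Adj u v → ∃ x ∈ B u, ∃ y ∈ B v, G.Adj x y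
  card_le : ∀ w ∈ S, (B w).card ≤ (H.degree w + 1) * ℓ

namespace IsPartialEmbedding

protected lemma empty : IsPartialEmbedding H G ℓ ∅ B := by
  constructor <;> simp

lemma mono (hB : IsPartialEmbedding H G ℓ S B) (hTS : T ⊆ S) : IsPartialEmbedding H G ℓ T B where
  connected w hw := hB.connected w (hTS hw)
  pairwiseDisjoint := hB.pairwiseDisjoint.subset (Finset.coe_subset.2 hTS)
  exists_adj u hu v hv := hB.exists_adj u (hTS hu) v (hTS hv)
  card_le w hw := hB.card_le w (hTS hw)

lemma isMinor (hB : IsPartialEmbedding H G ℓ Finset.univ B) : IsMinor H G :=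
  ⟨fun w => (B w : Set V), fun w => hB.connected w (Finset.mem_univ w),
    fun u v huv => Finset.disjoint_coe.2
      (hB.pairwiseDisjoint (Finset.mem_coe.2 (Finset.mem_univ u))
        (Finset.mem_coe.2 (Finset.mem_univ v)) huv),
    fun u v => hB.exists_adj u (Finset.mem_univ u) v (Finset.mem_univ v)⟩

variable [DecidableEq V]

lemma card_biUnion_le (hB : IsPartialEmbedding H G ℓ S B) :
    (S.biUnion B).card ≤ ∑ w, (H.degree w + 1) * ℓ :=
  Finset.card_biUnion_le.trans ((Finset.sum_le_sum hB.card_le).trans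
    (Finset.sum_le_univ_sum_of_nonneg fun _ => Nat.zero_le _))

variable [DecidableEq W]

lemma biUnion_erase (hB : IsPartialEmbedding H G ℓ S B) (hv : v ∈ S) :
    (S.erase v).biUnion B = S.biUnion B \ B v := by
  have hdisj : Disjoint ((S.erase v).biUnion B) (B v) := by
    refine (Finset.disjoint_biUnion_left _ _ _).2 fun u hu => ?_
    exact hB.pairwiseDisjoint (Finset.mem_of_mem_erase hu) hv (Finset.ne_of_mem_erase hu)
  rw [← Finset.insert_erase hv, Finset.biUnion_insert, Finset.erase_insert_eq_erase,
    Finset.erase_idem, Finset.union_sdiff_cancel_left hdisj.symm]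

protected lemma insert (hB : IsPartialEmbedding H G ℓ S B) (hv : v ∉ S)
    (hC : (G.induce (C : Set V)).Connected) (hdisj : Disjoint (S.biUnion B) C)
    (hadj : ∀ u ∈ S, H.Adj u v → ∃ x ∈ B u, ∃ y ∈ C, G.Adj x y)
    (hcard : C.card ≤ (H.degree v + 1) * ℓ) :
    IsPartialEmbedding H G ℓ (insert v S) (Function.update B v C) := by
  have hold {u : W} (hu : u ∈ S) : Function.update B v C u = B u :=
    Function.update_of_ne (ne_of_mem_of_not_mem hu hv) C B
  have hnew : Function.update B v C v = C := Function.update_self v C B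
  rw [Finset.disjoint_biUnion_left] at hdisj
  refine ⟨?_, ?_, ?_, ?_⟩
  · refine Finset.forall_mem_insert _ _ _ |>.2 ⟨hnew.symm ▸ hC, fun w hw => ?_⟩
    exact (hold hw).symm ▸ hB.connected w hw
  · rw [Finset.coe_insert, Set.pairwiseDisjoint_insert_of_notMem (Finset.mem_coe.not.2 hv)]
    refine ⟨fun u hu w hw huw => ?_, fun u hu => ?_⟩
    · rw [Function.onFun, hold hu, hold hw]
      exact hB.pairwiseDisjoint hu hw huw
    · rw [hnew, hold hu]
      exact (hdisj u hu).symm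
  · intro u hu w hw huw
    rcases Finset.mem_insert.1 hu with rfl | huS <;> rcases Finset.mem_insert.1 hw with rfl | hwS
    · exact absurd huw H.irrefl
    · obtain ⟨x, hx, y, hy, hxy⟩ := hadj w hwS huw.symm
      rw [hnew, hold hwS]
      exact ⟨y, hy, x, hx, hxy.symm⟩
    · rw [hnew, hold huS]
      exact hadj u huS huw
    · rw [hold huS, hold hwS]
      exact hB.exists_adj u huS w hwS huw
  · refine Finset.forall_mem_insert _ _ _ |>.2 ⟨hnew.symm ▸ hcard, fun w hw => ?_⟩
    exact (hold hw).symm ▸ hB.card_le w hw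

end IsPartialEmbedding

variable {b r : ℕ} {D : Finset V}

lemma IsPartialEmbedding.exists_insert [DecidableEq V] [DecidableEq W] [DecidableRel G.Adj]
    {R : Finset V}
    (hB : IsPartialEmbedding H G (2 * r + 2) S B) (hG : IsJoined G b) (hr : b ≤ 2 ^ r)
    (hexp : ExpandsOn G R b) (hR : R.Nonempty) (hSR : Disjoint (S.biUnion B) R)
    (hlive : ∀ w ∈ S, ∃ x ∈ B w, ∃ y ∈ R, G.Adj x y) (hv : v ∉ S) :
    ∃ C ⊆ R, IsPartialEmbedding H G (2 * r + 2) (insert v S) (Function.update B v C) := by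
  obtain ⟨z, hz⟩ := hR
  have : Nonempty V := ⟨z⟩
  choose! f hfB g hgR hfg using hlive
  set T := ({u ∈ S | H.Adj u v}).image g
  have hTR : T ⊆ R := Finset.image_subset_iff.2 fun u hu => hgR u (Finset.mem_filter.1 hu).1
  have hTcard : T.card ≤ H.degree v := by
    refine Finset.card_image_le.trans (Finset.card_le_card fun u hu => ?_)
    exact (H.mem_neighborFinset v u).2 (Finset.mem_filter.1 hu).2.symm
  obtain ⟨C, hCR, hTC, hCcard, hC⟩ := (hexp.isLinkable_insert hG hr hz hTR).mono
    (Nat.mul_le_mul_right _ (Nat.succ_le_succ hTcard)) (Finset.subset_insert z T)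
  refine ⟨C, hCR, hB.insert hv hC (hSR.mono_right hCR) (fun u hu huv => ?_) hCcard⟩
  exact ⟨f u, hfB u hu, g u,
    hTC (Finset.mem_image_of_mem g (Finset.mem_filter.2 ⟨hu, huv⟩)), hfg u hu⟩

variable [Fintype V]

/-- The bottleneck absorbs a set that does not expand, or a branch set without neighbours in the
remaining vertices; if neither exists, a new branch set can be linked. -/
lemma IsPartialEmbedding.exists_improvement [DecidableEq V] [DecidableRel G.Adj]
    (hB : IsPartialEmbedding H G (2 * r + 2) S B)
    (hD : IsBottleneck G b (S.biUnion B) D) (hb : 0 < b) (hr : b ≤ 2 ^ r)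
    (hV : 6 * b ≤ Fintype.card V) (hG : IsJoined G b)
    (hsize : ∑ w, (H.degree w + 1) * (2 * r + 2) ≤ b) (hS : S ≠ Finset.univ) :
    ∃ S' B' D', IsPartialEmbedding H G (2 * r + 2) S' B' ∧ IsBottleneck G b (S'.biUnion B') D' ∧
      toLex (D.card, S.card) < toLex (D'.card, S'.card) := by
  classical
  have hU : (S.biUnion B).card ≤ b := hB.card_biUnion_le.trans hsize
  set R := (S.biUnion B ∪ D)ᶜ with hR
  obtain ⟨hSR, hDR⟩ : Disjoint (S.biUnion B) R ∧ Disjoint D R :=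
    Finset.disjoint_union_left.1 disjoint_compl_right
  by_cases hexp : ExpandsOn G R b
  swap
  · simp only [ExpandsOn, not_forall, not_lt] at hexp
    obtain ⟨X, hXR, hXne, hXb, hX⟩ := hexp
    refine ⟨S, B, D ∪ X, hB, hD.union_of_card_boundary_le hG hV hU hXR hXb hX, ?_⟩
    rw [Finset.card_union_of_disjoint (hDR.mono_right hXR)]
    exact Prod.Lex.toLex_lt_toLex.2 (.inl (Nat.lt_add_of_pos_right hXne.card_pos))
  by_cases hlive : ∀ w ∈ S, ∃ x ∈ B w, ∃ y ∈ R, G.Adj x y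
  · obtain ⟨v, hv⟩ : ∃ v, v ∉ S := by simpa [Finset.eq_univ_iff_forall] using hS
    have hRne : R.Nonempty := by
      have hcard := Finset.card_union_le (S.biUnion B) D
      have hDb := hD.card_le
      rw [← Finset.card_pos, hR, Finset.card_compl]
      omega
    obtain ⟨C, hCR, hC⟩ := hB.exists_insert hG hr hexp hRne hSR hlive hv
    refine ⟨_, _, D, hC, ?_, Prod.Lex.toLex_lt_toLex.2 (.inr ⟨rfl, ?_⟩)⟩
    · rw [biUnion_insert_update hv]
      exact hD.mono Finset.subset_union_right
        (Finset.disjoint_union_left.2 ⟨(hDR.mono_right hCR).symm, hD.disjoint⟩)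
    · exact Finset.card_lt_card (Finset.ssubset_insert hv)
  · push Not at hlive
    obtain ⟨w, hw, hwR⟩ := hlive
    have hBw : B w ⊆ S.biUnion B := Finset.subset_biUnion_of_mem B hw
    refine ⟨S.erase w, B, D ∪ B w, hB.mono (Finset.erase_subset w S), ?_, ?_⟩
    · rw [hB.biUnion_erase hw]
      exact hD.union_of_not_adj hG hV hU hBw hwR
    · rw [Finset.card_union_of_disjoint (hD.disjoint.mono_left hBw).symm]
      have hne : (B w).Nonempty := Finset.nonempty_coe_sort.1 (hB.connected w hw).nonempty
      exact Prod.Lex.toLex_lt_toLex.2 (.inl (Nat.lt_add_of_pos_right hne.card_pos))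

lemma IsJoined.isMinor (hG : IsJoined G b) (hb : 0 < b) (hr : b ≤ 2 ^ r)
    (hV : 6 * b ≤ Fintype.card V) (hsize : ∑ w, (H.degree w + 1) * (2 * r + 2) ≤ b) :
    IsMinor H G := by
  classical
  obtain ⟨⟨S, B, D⟩, ⟨hB, hD⟩, hmax⟩ := Set.exists_max_image
    {s : Finset W × (W → Finset V) × Finset V |
      IsPartialEmbedding H G (2 * r + 2) s.1 s.2.1 ∧ IsBottleneck G b (s.1.biUnion s.2.1) s.2.2}
    (fun s => toLex (s.2.2.card, s.1.card)) (Set.toFinite _)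
    ⟨(∅, fun _ => ∅, ∅), IsPartialEmbedding.empty, isBottleneck_empty⟩
  by_cases hS : S = Finset.univ
  · exact (hS ▸ hB).isMinor
  · obtain ⟨S', B', D', hB', hD', hlt⟩ := hB.exists_improvement hD hb hr hV hG hsize hS
    exact absurd hlt (hmax (S', B', D') ⟨hB', hD'⟩).not_gt

end Embedding

section Contraction

variable {V W ι : Type*} {G G' : SimpleGraph V} {Q : SimpleGraph ι}

lemma connected_induce_biUnion {s : Set ι} {ψ : ι → Set V} (hs : (Q.induce s).Connected)
    (hψ : ∀ i ∈ s, (G.induce (ψ i)).Connected)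
    (hadj : ∀ i ∈ s, ∀ j ∈ s, Q.Adj i j → ∃ x ∈ ψ i, ∃ y ∈ ψ j, G.Adj x y) :
    (G.induce (⋃ i ∈ s, ψ i)).Connected := by
  have hsub {i : ι} (hi : i ∈ s) : ψ i ⊆ ⋃ i ∈ s, ψ i := Set.subset_biUnion_of_mem hi
  have hwalk {i j : s} (w : (Q.induce s).Walk i j) :
      ∃ t ⊆ ⋃ i ∈ s, ψ i, ψ i ⊆ t ∧ ψ j ⊆ t ∧ (G.induce t).Connected := by
    induction w with
    | @nil i => exact ⟨ψ i, hsub i.2, subset_rfl, subset_rfl, hψ i i.2⟩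
    | @cons i j k hij _ ih =>
      obtain ⟨t, ht, hjt, hkt, htconn⟩ := ih
      obtain ⟨x, hx, y, hy, hxy⟩ := hadj i i.2 j j.2 hij
      exact ⟨ψ i ∪ t, Set.union_subset (hsub i.2) ht, Set.subset_union_left,
        hkt.trans Set.subset_union_right, SimpleGraph.connected_induce_union
          (hψ i i.2).preconnected htconn.preconnected hx (hjt hy) hxy⟩
  obtain ⟨i⟩ := hs.nonempty
  obtain ⟨x⟩ := (hψ i i.2).nonempty
  refine SimpleGraph.induce_connected_of_patches (x : V) (hsub i.2 x.2) @fun y hy => ?_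
  obtain ⟨j, hj, hyj⟩ := Set.mem_iUnion₂.1 hy
  obtain ⟨w⟩ := hs.preconnected i ⟨j, hj⟩
  obtain ⟨t, ht, hit, hjt, htconn⟩ := hwalk w
  exact ⟨t, ht, hit x.2, hjt hyj, htconn.preconnected _ _⟩

lemma IsMinor.trans {H : SimpleGraph W} (hHQ : IsMinor H Q) (hQG : IsMinor Q G) :
    IsMinor H G := by
  obtain ⟨φ, hφ, hφdisj, hφadj⟩ := hHQ
  obtain ⟨ψ, hψ, hψdisj, hψadj⟩ := hQG
  refine ⟨fun u => ⋃ i ∈ φ u, ψ i, fun u => ?_, fun u v huv => ?_, fun u v huv => ?_⟩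
  · exact connected_induce_biUnion (hφ u) (fun i _ => hψ i) fun i _ j _ => hψadj i j
  · simp only [Set.disjoint_iUnion_left, Set.disjoint_iUnion_right]
    exact fun j hj i hi => hψdisj i j ((hφdisj u v huv).ne_of_mem hi hj)
  · obtain ⟨i, hi, j, hj, hij⟩ := hφadj u v huv
    obtain ⟨x, hx, y, hy, hxy⟩ := hψadj i j hij
    exact ⟨x, Set.mem_biUnion hi hx, y, Set.mem_biUnion hj hy, hxy⟩

/-- The graph on the index set of a family of blocks `φ i` in which two indices are adjacent if
`G` has an edge between their blocks. -/
def blockGraph (G : SimpleGraph V) (φ : ι → Finset V) : SimpleGraph ι :=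
  SimpleGraph.fromRel fun i j => ∃ x ∈ φ i, ∃ y ∈ φ j, G.Adj x y

lemma blockGraph_isMinor {φ : ι → Finset V} (hφ : ∀ i, (G.induce (φ i : Set V)).Connected)
    (hdisj : Pairwise (Function.onFun Disjoint φ)) (hle : G' ≤ G) :
    IsMinor (blockGraph G' φ) G := by
  refine ⟨fun i => (φ i : Set V), hφ, fun i j hij => Finset.disjoint_coe.2 (hdisj hij), ?_⟩
  rintro i j ⟨-, ⟨x, hx, y, hy, hxy⟩ | ⟨y, hy, x, hx, hyx⟩⟩
  · exact ⟨x, hx, y, hy, hle hxy⟩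
  · exact ⟨x, hx, y, hy, hle hyx.symm⟩

lemma connected_induce_range (f : Q →g G) (hQ : Q.Connected) :
    (G.induce (Set.range f)).Connected :=
  hQ.map (H := G.induce (Set.range f))
    { toFun := Set.rangeFactorization f
      map_rel' := f.map_rel } Set.rangeFactorization_surjective

lemma exists_blocks_of_pathGraph {N K : ℕ} (hK : 0 < K)
    (hG : SimpleGraph.pathGraph (N * K) ⊑ G) :
    ∃ φ : Fin N → Finset V, (∀ i, (G.induce (φ i : Set V)).Connected) ∧
      Pairwise (Function.onFun Disjoint φ) ∧ ∀ i, (φ i).card = K := by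
  classical
  obtain ⟨g⟩ := hG
  have hinj : Function.Injective fun x : Fin N × Fin K => g (finProdFinEquiv x) :=
    g.injective.comp finProdFinEquiv.injective
  refine ⟨fun i => Finset.univ.image fun r => g (finProdFinEquiv (i, r)), fun i => ?_,
    fun i j hij => ?_, fun i => ?_⟩
  · let f : SimpleGraph.pathGraph K →g G :=
      { toFun r := g (finProdFinEquiv (i, r))
        map_rel' {r s} hrs := g.toHom.map_rel <| by
          rw [SimpleGraph.pathGraph_adj] at hrs ⊢
          simp only [finProdFinEquiv_apply_val]
          omega }
    obtain ⟨k, rfl⟩ := Nat.exists_eq_succ_of_ne_zero hK.ne'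
    rw [Finset.coe_image, Finset.coe_univ, Set.image_univ]
    exact connected_induce_range f (SimpleGraph.pathGraph_connected k)
  · simp only [Function.onFun, Finset.disjoint_left, Finset.mem_image, Finset.mem_univ, true_and]
    rintro _ ⟨r, rfl⟩ ⟨s, hs⟩
    exact hij (Prod.ext_iff.1 (hinj hs)).1.symm
  · exact (Finset.card_image_of_injective _ (hinj.comp (Prod.mk_right_injective i))).trans
      (Finset.card_fin K)

lemma sum_degree_add_one_le [Fintype V] (H : SimpleGraph V) [DecidableRel H.Adj] :
    ∑ v, (H.degree v + 1) ≤ 2 * gsize H := by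
  rw [Finset.sum_add_distrib, H.sum_degrees_eq_twice_card_edges, gsize,
    Nat.card_eq_fintype_card (α := V), Nat.card_eq_fintype_card, ← SimpleGraph.edgeFinset_card]
  simp only [Finset.sum_const, Finset.card_univ, smul_eq_mul]
  omega

end Contraction

section RandomBlockGraph

variable {V ι : Type*} {φ : ι → Finset V} {b K r : ℕ} {p p₁ p₂ : ℝ}

/-- `G` contains every finite graph of size at most `s` as a minor. -/
def ContainsMinorsUpTo (G : SimpleGraph V) (s : ℝ) : Prop :=
  ∀ (m : ℕ) (H : SimpleGraph (Fin m)), (gsize H : ℝ) ≤ s → IsMinor H G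

lemma IsJoined.containsMinorsUpTo [Fintype ι] {G G' : SimpleGraph V} {s : ℝ}
    (hJ : IsJoined (blockGraph G' φ) b) (hφ : ∀ i, (G.induce (φ i : Set V)).Connected)
    (hdisj : Pairwise (Function.onFun Disjoint φ)) (hle : G' ≤ G) (hb : 0 < b) (hr : b ≤ 2 ^ r)
    (hι : 6 * b ≤ Fintype.card ι) (hs : 2 * s * (2 * r + 2) ≤ b) : ContainsMinorsUpTo G s := by
  classical
  intro m H hH
  refine (hJ.isMinor hb hr hι ?_).trans (blockGraph_isMinor hφ hdisj hle)
  have hsize : ((2 * gsize H * (2 * r + 2) : ℕ) : ℝ) ≤ b := by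
    push_cast
    refine le_trans ?_ hs
    gcongr
  rw [← Finset.sum_mul]
  exact (Nat.mul_le_mul_right _ (sum_degree_add_one_le H)).trans (by exact_mod_cast hsize)

variable [DecidableEq V]

lemma exists_disjoint_pairsBetween_of_not_isJoined {B : Finset (Sym2 V)}
    (hdisj : Pairwise (Function.onFun Disjoint φ))
    (hB : ¬ IsJoined (blockGraph (SimpleGraph.fromEdgeSet (B : Set (Sym2 V))) φ) b) :
    ∃ X Y : Finset ι, Disjoint X Y ∧ X.card = b ∧ Y.card = b ∧
      Disjoint (pairsBetween (X.biUnion φ) (Y.biUnion φ)) B := by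
  simp only [IsJoined, not_forall] at hB
  obtain ⟨X, Y, hXY, hbX, hbY, hno⟩ := hB
  obtain ⟨X', hX', hX'b⟩ := Finset.exists_subset_card_eq hbX
  obtain ⟨Y', hY', hY'b⟩ := Finset.exists_subset_card_eq hbY
  refine ⟨X', Y', hXY.mono hX' hY', hX'b, hY'b, Finset.disjoint_left.2 fun e he heB => hno ?_⟩
  obtain ⟨x, hx, y, hy, rfl⟩ := mem_pairsBetween.1 he
  obtain ⟨i, hi, hxi⟩ := Finset.mem_biUnion.1 hx
  obtain ⟨j, hj, hyj⟩ := Finset.mem_biUnion.1 hy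
  have hij : i ≠ j := Finset.disjoint_iff_ne.1 hXY i (hX' hi) j (hY' hj)
  refine ⟨i, hX' hi, j, hY' hj, hij, .inl ⟨x, hxi, y, hyj, ?_⟩⟩
  exact (SimpleGraph.fromEdgeSet_adj _).2 ⟨heB, Finset.disjoint_iff_ne.1 (hdisj hij) x hxi y hyj⟩

variable [Fintype V]

lemma subsetProb_disjoint_pairsBetween {S T : Finset V} (hST : Disjoint S T) :
    subsetProb p (⊤ : SimpleGraph V).edgeFinset (Disjoint (pairsBetween S T)) =
      (1 - p) ^ (S.card * T.card) := by
  rw [subsetProb_disjoint, card_pairsBetween hST]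
  intro e he
  obtain ⟨x, hx, y, hy, rfl⟩ := mem_pairsBetween.1 he
  exact SimpleGraph.mem_edgeFinset.2 (Finset.disjoint_iff_ne.1 hST x hx y hy)

lemma subsetProb_not_isJoined_le [Fintype ι] (hp0 : 0 ≤ p) (hp1 : p ≤ 1)
    (hdisj : Pairwise (Function.onFun Disjoint φ)) (hcard : ∀ i, (φ i).card = K) (b : ℕ) :
    subsetProb p (⊤ : SimpleGraph V).edgeFinset (fun B =>
        ¬ IsJoined (blockGraph (SimpleGraph.fromEdgeSet (B : Set (Sym2 V))) φ) b) ≤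
      4 ^ Fintype.card ι * (1 - p) ^ (b * K * (b * K)) := by
  classical
  set I : Finset (Finset ι × Finset ι) :=
    {q | Disjoint q.1 q.2 ∧ q.1.card = b ∧ q.2.card = b}
  have hI_card : (I.card : ℝ) ≤ 4 ^ Fintype.card ι := by
    have hle : I.card ≤ 2 ^ Fintype.card ι * 2 ^ Fintype.card ι := by
      simpa using Finset.card_le_univ I
    rw [← mul_pow] at hle
    exact_mod_cast hle
  have hbiUnion_card (X : Finset ι) : (X.biUnion φ).card = X.card * K := by
    rw [Finset.card_biUnion fun i _ j _ hij => hdisj hij, Finset.sum_const_nat fun i _ => hcard i]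
  have hblock (q : Finset ι × Finset ι) (hq : q ∈ I) :
      subsetProb p (⊤ : SimpleGraph V).edgeFinset
        (Disjoint (pairsBetween (q.1.biUnion φ) (q.2.biUnion φ))) =
          (1 - p) ^ (b * K * (b * K)) := by
    obtain ⟨hq_disj, hq₁, hq₂⟩ := (Finset.mem_filter.1 hq).2
    have hunion : Disjoint (q.1.biUnion φ) (q.2.biUnion φ) := by
      simp only [Finset.disjoint_biUnion_left, Finset.disjoint_biUnion_right]
      exact fun j hj i hi => hdisj (Finset.disjoint_iff_ne.1 hq_disj i hi j hj)
    rw [subsetProb_disjoint_pairsBetween hunion, hbiUnion_card, hbiUnion_card, hq₁, hq₂]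
  calc subsetProb p (⊤ : SimpleGraph V).edgeFinset (fun B =>
        ¬ IsJoined (blockGraph (SimpleGraph.fromEdgeSet (B : Set (Sym2 V))) φ) b)
      ≤ subsetProb p (⊤ : SimpleGraph V).edgeFinset fun B =>
          ∃ q ∈ I, Disjoint (pairsBetween (q.1.biUnion φ) (q.2.biUnion φ)) B := by
        refine subsetProb_mono hp0 hp1 fun B _ hB => ?_
        obtain ⟨X, Y, hXY, hX, hY, hXYB⟩ := exists_disjoint_pairsBetween_of_not_isJoined hdisj hB
        exact ⟨(X, Y), Finset.mem_filter.2 ⟨Finset.mem_univ _, hXY, hX, hY⟩, hXYB⟩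
    _ ≤ ∑ q ∈ I, subsetProb p (⊤ : SimpleGraph V).edgeFinset
          (Disjoint (pairsBetween (q.1.biUnion φ) (q.2.biUnion φ))) :=
        subsetProb_exists_le hp0 hp1 I _
    _ = I.card * (1 - p) ^ (b * K * (b * K)) := by
        rw [Finset.sum_congr rfl hblock, Finset.sum_const, nsmul_eq_mul]
    _ ≤ 4 ^ Fintype.card ι * (1 - p) ^ (b * K * (b * K)) :=
        mul_le_mul_of_nonneg_right hI_card (pow_nonneg (sub_nonneg.2 hp1) _)

lemma subsetProb_not_containsMinorsUpTo_le {s : ℝ} (hp : 1 - p = (1 - p₁) * (1 - p₂))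
    (hp₁0 : 0 ≤ p₁) (hp₁1 : p₁ ≤ 1) (hp₂0 : 0 ≤ p₂) (hp₂1 : p₂ ≤ 1) (hK : 0 < K) (hb : 0 < b)
    (hr : b ≤ 2 ^ r) (hs : 2 * s * (2 * r + 2) ≤ b) :
    subsetProb p (⊤ : SimpleGraph V).edgeFinset (fun A =>
        ¬ ContainsMinorsUpTo (SimpleGraph.fromEdgeSet (A : Set (Sym2 V))) s) ≤
      subsetProb p₁ (⊤ : SimpleGraph V).edgeFinset (HasNoPath (6 * b * K)) +
        4 ^ (6 * b) * (1 - p₂) ^ (b * K * (b * K)) := by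
  refine subsetProb_le_of_sprinkle hp hp₁0 hp₁1 hp₂0 hp₂1
    (mul_nonneg (by positivity) (pow_nonneg (sub_nonneg.2 hp₂1) _)) fun A _ hA => ?_
  obtain ⟨φ, hφ, hdisj, hcard⟩ := exists_blocks_of_pathGraph hK (not_not.1 hA)
  have hJoined := subsetProb_not_isJoined_le hp₂0 hp₂1 hdisj hcard b
  rw [Fintype.card_fin] at hJoined
  refine (subsetProb_mono hp₂0 hp₂1 fun B _ hAB hB => hAB ?_).trans hJoined
  have hA_le : SimpleGraph.fromEdgeSet (A : Set (Sym2 V)) ≤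
      SimpleGraph.fromEdgeSet ((A ∪ B : Finset (Sym2 V)) : Set (Sym2 V)) :=
    SimpleGraph.fromEdgeSet_mono (Finset.coe_subset.2 Finset.subset_union_left)
  refine hB.containsMinorsUpTo (fun i => (hφ i).mono (SimpleGraph.comap_monotone _ hA_le)) hdisj
    (SimpleGraph.fromEdgeSet_mono (Finset.coe_subset.2 Finset.subset_union_right)) hb hr ?_ hs
  exact (Fintype.card_fin _).ge

end RandomBlockGraph

section Rates

lemma exists_sprinkling_rate {p p₁ : ℝ} (h0 : 0 ≤ p₁) (hle : p₁ ≤ p) (hp : p < 1) :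
    ∃ q, p - p₁ ≤ q ∧ q ≤ 1 ∧ 1 - p = (1 - p₁) * (1 - q) := by
  have hpos : 0 < 1 - p₁ := by linarith
  refine ⟨(p - p₁) / (1 - p₁), ?_, (div_le_one hpos).2 (by linarith), by field_simp; ring⟩
  exact le_div_self (sub_nonneg.2 hle) hpos (by linarith)

lemma four_pow_mul_one_sub_pow_le_exp {q : ℝ} {b K : ℕ} (hq : q ≤ 1)
    (hbK : 13 ≤ q * (b * K ^ 2)) :
    4 ^ (6 * b) * (1 - q) ^ (b * K * (b * K)) ≤ Real.exp (-b) := by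
  have hfour : (4 : ℝ) ≤ Real.exp 2 := by
    rw [show (2 : ℝ) = 1 + 1 by norm_num, Real.exp_add]
    nlinarith [Real.add_one_le_exp 1]
  calc 4 ^ (6 * b) * (1 - q) ^ (b * K * (b * K))
      ≤ Real.exp 2 ^ (6 * b) * Real.exp (-q) ^ (b * K * (b * K)) := by
        have := sub_nonneg.2 hq
        gcongr
        exact Real.one_sub_le_exp_neg q
    _ = Real.exp (12 * b - q * (b * K ^ 2) * b) := by
        rw [← Real.exp_nat_mul, ← Real.exp_nat_mul, ← Real.exp_add]
        push_cast
        ring_nf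
    _ ≤ Real.exp (-b) := Real.exp_le_exp.2 <| by
        linarith [mul_le_mul_of_nonneg_right hbK (Nat.cast_nonneg (α := ℝ) b)]

lemma div_logb_mul_log_le {x : ℝ} {n : ℕ} (hx : 0 ≤ x) (hn : 2 ≤ n) :
    2 * (x / Real.logb 2 n) * (2 * (Nat.log 2 n + 1 : ℕ) + 2) ≤ 12 * x := by
  have hone : 1 ≤ Real.logb 2 n := by
    rw [Real.le_logb_iff_rpow_le one_lt_two (by positivity), Real.rpow_one]
    exact_mod_cast hn
  have hlog : (Nat.log 2 n : ℝ) ≤ Real.logb 2 n := by exact_mod_cast Real.natLog_le_logb n 2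
  have hfactor : 2 * (2 * ((Nat.log 2 n + 1 : ℕ) : ℝ) + 2) ≤ 12 * Real.logb 2 n := by
    push_cast
    linarith
  calc 2 * (x / Real.logb 2 n) * (2 * (Nat.log 2 n + 1 : ℕ) + 2)
      = x / Real.logb 2 n * (2 * (2 * (Nat.log 2 n + 1 : ℕ) + 2)) := by ring
    _ ≤ x / Real.logb 2 n * (12 * Real.logb 2 n) := by gcongr
    _ = 12 * x := by field_simp

lemma subsetProb_not_containsMinorsUpTo_le_add_exp {ε κ : ℝ} {n K : ℕ} (hε : 0 < ε)
    (hκ0 : 0 < κ) (hκ1 : κ ≤ 1) (hK : 0 < K) (hεκ : 52 ≤ ε * κ * K ^ 2) (hn : 1 + ε < n)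
    (hκn : 2 ≤ κ * n) :
    subsetProb ((1 + ε) / n) (⊤ : SimpleGraph (Fin n)).edgeFinset (fun A =>
        ¬ ContainsMinorsUpTo (SimpleGraph.fromEdgeSet (A : Set (Sym2 (Fin n))))
          (κ / 24 * n / Real.logb 2 n)) ≤
      subsetProb ((1 + ε / 2) / n) (⊤ : SimpleGraph (Fin n)).edgeFinset
        (HasNoPath (6 * ⌊κ * n⌋₊ * K)) + Real.exp (-(κ / 2 * n)) := by
  have hn0 : (0 : ℝ) < n := by linarith
  have hn2 : 2 ≤ n := by exact_mod_cast (show (2 : ℝ) ≤ n by nlinarith)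
  set b := ⌊κ * n⌋₊
  have hb_lower : κ * n / 2 ≤ b := by linarith [Nat.lt_floor_add_one (κ * n)]
  have hb0 : 0 < b := Nat.floor_pos.2 (by linarith)
  have hbr : b ≤ 2 ^ (Nat.log 2 n + 1) :=
    (Nat.floor_le_of_le (mul_le_of_le_one_left hn0.le hκ1)).trans
      (Nat.lt_pow_succ_log_self one_lt_two n).le
  obtain ⟨q, hq, hq1, hpq⟩ := exists_sprinkling_rate (p := (1 + ε) / n) (p₁ := (1 + ε / 2) / n)
    (by positivity) (by gcongr; linarith) ((div_lt_one hn0).2 hn)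
  have hq_lower : ε / 2 / n ≤ q := hq.trans' (by rw [← sub_div]; gcongr; linarith)
  have hq0 : 0 ≤ q := hq_lower.trans' (by positivity)
  have hbK : 13 ≤ q * (b * K ^ 2) :=
    calc (13 : ℝ) ≤ ε * κ * K ^ 2 / 4 := by linarith
      _ = ε / 2 / n * (κ * n / 2 * K ^ 2) := by field_simp; ring
      _ ≤ q * (b * K ^ 2) := by gcongr
  have hsize := div_logb_mul_log_le (x := κ / 24 * n) (by positivity) hn2
  refine (subsetProb_not_containsMinorsUpTo_le hpq (by positivity)
    ((div_le_one hn0).2 (by linarith)) hq0 hq1 hK hb0 hbr (by linarith)).trans ?_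
  gcongr
  exact (four_pow_mul_one_sub_pow_le_exp hq1 hbK).trans (Real.exp_le_exp.2 (by linarith))

lemma tendsto_exp_neg_mul_natCast {c : ℝ} (hc : 0 < c) :
    Filter.Tendsto (fun n : ℕ => Real.exp (-(c * n))) Filter.atTop (nhds 0) :=
  Real.tendsto_exp_neg_atTop_nhds_zero.comp
    (tendsto_natCast_atTop_atTop.const_mul_atTop hc)

lemma exists_tendsto_subsetProb_not_containsMinorsUpTo {ε : ℝ} (hε : 0 < ε) :
    ∃ c : ℝ, 0 < c ∧ Filter.Tendsto
      (fun n : ℕ => subsetProb ((1 + ε) / n) (⊤ : SimpleGraph (Fin n)).edgeFinset fun A =>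
        ¬ ContainsMinorsUpTo (SimpleGraph.fromEdgeSet (A : Set (Sym2 (Fin n))))
          (c * n / Real.logb 2 n)) Filter.atTop (nhds 0) := by
  obtain ⟨δ, hδ0, hδ1, a, ha, hpath⟩ := exists_subsetProb_hasNoPath_le (half_pos hε)
  obtain ⟨K, hK⟩ := exists_nat_ge (312 / (ε * δ))
  have hK0 : 0 < K := by exact_mod_cast (show (0 : ℝ) < 312 / (ε * δ) by positivity).trans_le hK
  have hK1 : (1 : ℝ) ≤ K := by exact_mod_cast hK0
  set κ : ℝ := δ / (6 * K) with hκ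
  have hκ0 : 0 < κ := by positivity
  have hκ1 : κ ≤ 1 := (div_le_one (by positivity)).2 (by linarith)
  have hεκ : 52 ≤ ε * κ * K ^ 2 := by
    rw [div_le_iff₀' (by positivity)] at hK
    rw [hκ, show ε * (δ / (6 * K)) * K ^ 2 = ε * δ * K / 6 by field_simp]
    linarith
  refine ⟨κ / 24, by positivity, ?_⟩
  have hlim := (tendsto_exp_neg_mul_natCast ha).add
    (tendsto_exp_neg_mul_natCast (by positivity : 0 < κ / 2))
  rw [add_zero] at hlim
  have hlarge := tendsto_natCast_atTop_atTop.eventually_ge_atTop (max (2 + ε) (2 / κ))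
  refine tendsto_of_tendsto_of_tendsto_of_le_of_le' tendsto_const_nhds hlim ?_ ?_
  · filter_upwards [hlarge] with n hn
    have hnε := (le_max_left _ _).trans hn
    exact subsetProb_nonneg (by positivity) (div_le_one_of_le₀ (by linarith) n.cast_nonneg) _
  · filter_upwards [hlarge, hpath] with n hn hpath_n
    have hnε := (le_max_left _ _).trans hn
    have hnκ := (div_le_iff₀' hκ0).1 ((le_max_right _ _).trans hn)
    have hL : ((6 * ⌊κ * n⌋₊ * K : ℕ) : ℝ) ≤ δ * n := by
      push_cast
      calc 6 * (⌊κ * n⌋₊ : ℝ) * K ≤ 6 * (κ * n) * K := by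
            gcongr
            exact Nat.floor_le (by positivity)
        _ = δ * n := by rw [hκ]; field_simp
    exact (subsetProb_not_containsMinorsUpTo_le_add_exp hε hκ0 hκ1 hK0 hεκ (by linarith)
      hnκ).trans (add_le_add_left (hpath_n _ hL) _)

end Rates

/-- For every `ε > 0` there is a constant `c_ε > 0` such that the probability that
`G ~ G(n, (1+ε)/n)` contains every graph of size at most `c_ε·n/log₂ n` as a minor
tends to `1` as `n → ∞`. -/
theorem random_graph_contains_all_small_minors :
    ∀ ε : ℝ, 0 < ε →
      ∃ c : ℝ, 0 < c ∧
        Filter.Tendsto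
          (fun n : ℕ =>
            erProb n ((1 + ε) / n)
              (fun G => ∀ (m : ℕ) (H : SimpleGraph (Fin m)),
                (gsize H : ℝ) ≤ c * n / Real.logb 2 n → IsMinor H G))
          Filter.atTop (nhds 1) := by
  intro ε hε
  obtain ⟨c, hc, hfail⟩ := exists_tendsto_subsetProb_not_containsMinorsUpTo hε
  refine ⟨c, hc, ?_⟩
  have hlim := hfail.const_sub 1
  rw [sub_zero] at hlim
  refine hlim.congr fun n => ?_
  rw [subsetProb_not, sub_sub_cancel, erProb_eq_subsetProb]
  rfl
end
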